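/- arXiv:2208.10203 — 4 statements merged into one kernel-verified Lean document; each statement's English description precedes it below -/
import Mathlib

section
/- Let 𝒳=(x_j) be a semi-normalized Schauder basis of a quasi-Banach space 𝕏, let 𝕊 be a locally convex subsymmetric sequence space, and let σ=(σ_n) be an ordered partition of ℕ with N_n=|σ_n| and M_r=Σ_{n=1}^r N_n. Assume that the fundamental function Λ[𝕊] has both the lower regularity property and the upper regularity property, and that M_r ≲ N_{r+1} for all r. Then the unit vector system of 𝕐[𝒳,𝕊,σ] is asymptotically suppression unconditional. -/
noncomputable section

open Classical
open scoped ENNReal NNReal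

namespace AGpaper

/-! ### Convergence and completeness with respect to a gauge -/

/-- Convergence of a sequence with respect to a gauge (quasi-norm) `q`. -/
def QTendsto {X : Type*} [AddCommGroup X] (q : X → ℝ) (u : ℕ → X) (x : X) : Prop :=
  ∀ ε : ℝ, 0 < ε → ∃ n₀ : ℕ, ∀ n, n₀ ≤ n → q (u n - x) < ε

/-- Cauchy condition with respect to a gauge `q`. -/
def QCauchy {X : Type*} [AddCommGroup X] (q : X → ℝ) (u : ℕ → X) : Prop :=
  ∀ ε : ℝ, 0 < ε → ∃ n₀ : ℕ, ∀ m, n₀ ≤ m → ∀ n, n₀ ≤ n → q (u m - u n) < ε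

/-- A quasi-Banach space structure on a real vector space `X`. -/
structure QuasiBanach (X : Type*) [AddCommGroup X] [Module ℝ X] where
  q : X → ℝ
  kappa : ℝ
  one_le_kappa : 1 ≤ kappa
  q_nonneg : ∀ x, 0 ≤ q x
  q_eq_zero_iff : ∀ x, q x = 0 ↔ x = 0
  q_smul : ∀ (a : ℝ) (x : X), q (a • x) = |a| * q x
  q_triangle : ∀ x y, q (x + y) ≤ kappa * (q x + q y)
  complete : ∀ u : ℕ → X, QCauchy q u → ∃ x, QTendsto q u x

/-- `X` is `p`-convex (0<p≤1): after renorming the quasi-norm is a `p`-norm. -/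
def QuasiBanach.PConvex {X : Type*} [AddCommGroup X] [Module ℝ X]
    (B : QuasiBanach X) (p : ℝ) : Prop :=
  ∃ q' : X → ℝ, (∀ x, 0 ≤ q' x) ∧ (∀ (a : ℝ) (x : X), q' (a • x) = |a| * q' x) ∧
    (∀ x y, q' (x + y) ^ p ≤ q' x ^ p + q' y ^ p) ∧
    ∃ c C : ℝ, 0 < c ∧ ∀ x, c * B.q x ≤ q' x ∧ q' x ≤ C * B.q x

/-! ### Biorthogonal systems and Schauder bases -/

variable {X : Type*} [AddCommGroup X] [Module ℝ X]

/-- A biorthogonal system in a space of vectors `X` which is equipped with a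
membership predicate `mem` (the carrier of the space) and a gauge `nrm`:
the coordinate functionals are linear and bounded on the carrier. -/
structure BioSystem (mem : X → Prop) (nrm : X → ℝ) where
  vec : ℕ → X
  vec_mem : ∀ n, mem (vec n)
  coord : ℕ → X → ℝ
  coord_add : ∀ (n : ℕ) (f g : X), mem f → mem g → coord n (f + g) = coord n f + coord n g
  coord_smul : ∀ (n : ℕ) (a : ℝ) (f : X), mem f → coord n (a • f) = a * coord n f
  coord_bdd : ∀ n : ℕ, ∃ C : ℝ, ∀ f, mem f → |coord n f| ≤ C * nrm f
  biorth : ∀ m n, coord m (vec n) = if m = n then (1 : ℝ) else 0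

/-- A Schauder basis: a biorthogonal system whose expansions converge. -/
structure SchauderB (mem : X → Prop) (nrm : X → ℝ) extends BioSystem mem nrm where
  expansion : ∀ f, mem f →
    QTendsto nrm (fun m => ∑ n ∈ Finset.range m, coord n f • vec n) f

/-- A Schauder basis of a quasi-Banach space. -/
abbrev QBasis {X : Type*} [AddCommGroup X] [Module ℝ X] (B : QuasiBanach X) :=
  SchauderB (fun _ : X => True) B.q

variable {mem : X → Prop} {nrm : X → ℝ}

/-- Coordinate projection on a finite set `A`. -/
def BioSystem.proj (b : BioSystem mem nrm) (A : Finset ℕ) (f : X) : X :=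
  ∑ n ∈ A, b.coord n f • b.vec n

def BioSystem.SemiNormalized (b : BioSystem mem nrm) : Prop :=
  ∃ c C : ℝ, 0 < c ∧ ∀ n, c ≤ nrm (b.vec n) ∧ nrm (b.vec n) ≤ C

/-- `A` is a greedy set of `f`. -/
def BioSystem.GreedySet (b : BioSystem mem nrm) (f : X) (A : Finset ℕ) : Prop :=
  ∀ j ∈ A, ∀ k, k ∉ A → |b.coord k f| ≤ |b.coord j f|

def BioSystem.QuasiGreedy (b : BioSystem mem nrm) : Prop :=
  ∃ C : ℝ, ∀ f, mem f → ∀ A : Finset ℕ, b.GreedySet f A → nrm (b.proj A f) ≤ C * nrm f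

def BioSystem.Democratic (b : BioSystem mem nrm) : Prop :=
  ∃ C : ℝ, ∀ A B : Finset ℕ, A.card ≤ B.card →
    nrm (∑ n ∈ A, b.vec n) ≤ C * nrm (∑ n ∈ B, b.vec n)

def BioSystem.AlmostGreedy (b : BioSystem mem nrm) : Prop :=
  b.QuasiGreedy ∧ b.Democratic

/-- Asymptotic suppression unconditionality: coordinate projections `S_A` with
`|A| < min A` are uniformly bounded. -/
def BioSystem.ASU (b : BioSystem mem nrm) : Prop :=
  ∃ D : ℝ, ∀ A : Finset ℕ, (∀ n ∈ A, A.card < n) →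
    ∀ f, mem f → nrm (b.proj A f) ≤ D * nrm f

/-- The fundamental function (upper super-democracy function). -/
def BioSystem.fundFun (b : BioSystem mem nrm) (m : ℕ) : ℝ :=
  sSup {t : ℝ | ∃ (A : Finset ℕ) (ε : ℕ → ℝ), A.card ≤ m ∧ (∀ n ∈ A, |ε n| = 1) ∧
    t = nrm (∑ n ∈ A, ε n • b.vec n)}

/-- The unconditionality parameters `k_m`. -/
def BioSystem.kparam (b : BioSystem mem nrm) (m : ℕ) : ℝ :=
  sSup {t : ℝ | ∃ (A : Finset ℕ) (f : X), A.card ≤ m ∧ mem f ∧ nrm f ≤ 1 ∧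
    t = nrm (b.proj A f)}

/-- The unconditionality parameters `k̃_m` (restricted to the span of the first
`m` basis vectors). -/
def BioSystem.ktilde (b : BioSystem mem nrm) (m : ℕ) : ℝ :=
  sSup {t : ℝ | ∃ (A : Finset ℕ) (a : ℕ → ℝ),
    nrm (∑ n ∈ Finset.range m, a n • b.vec n) ≤ 1 ∧
    t = nrm (b.proj A (∑ n ∈ Finset.range m, a n • b.vec n))}

/-! ### Symmetric and subsymmetric sequence spaces -/

/-- The indicator of `{0, 1, ..., m-1}`. -/
def indic (m : ℕ) : ℕ → ℝ := fun j => if j < m then 1 else 0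

/-- The `n`-th unit vector. -/
def unitVec (n : ℕ) : ℕ → ℝ := fun j => if j = n then 1 else 0

/-- The spreading `Σ_n ε_n f_n e_{φ(n)}` of a sequence `f`. -/
def spread (φ : ℕ → ℕ) (ε : ℕ → ℝ) (f : ℕ → ℝ) : ℕ → ℝ :=
  fun j => if h : ∃ n, φ n = j then ε h.choose * f h.choose else 0

/-- A symmetric sequence space: a quasi-Banach sequence space whose quasi-norm is
invariant under permutations and signs. -/
structure SymmetricSpace where
  mem : (ℕ → ℝ) → Prop
  nrm : (ℕ → ℝ) → ℝ
  kappa : ℝ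
  one_le_kappa : 1 ≤ kappa
  zero_mem : mem 0
  add_mem : ∀ {f g}, mem f → mem g → mem (f + g)
  smul_mem : ∀ (a : ℝ) {f}, mem f → mem (a • f)
  nrm_nonneg : ∀ f, 0 ≤ nrm f
  nrm_eq_zero : ∀ {f}, mem f → (nrm f = 0 ↔ f = 0)
  nrm_smul : ∀ (a : ℝ) (f : ℕ → ℝ), nrm (a • f) = |a| * nrm f
  nrm_triangle : ∀ {f g}, mem f → mem g → nrm (f + g) ≤ kappa * (nrm f + nrm g)
  complete : ∀ u : ℕ → (ℕ → ℝ), (∀ n, mem (u n)) → QCauchy nrm u →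
    ∃ f, mem f ∧ QTendsto nrm u f
  symmetric : ∀ {f}, mem f → ∀ (ε : ℕ → ℝ), (∀ n, |ε n| = 1) → ∀ π : Equiv.Perm ℕ,
    mem (fun j => ε j * f (π j)) ∧ nrm (fun j => ε j * f (π j)) = nrm f

/-- Fundamental function of a symmetric sequence space. -/
def SymmetricSpace.Lam (S : SymmetricSpace) (m : ℕ) : ℝ := S.nrm (indic m)

/-- A (locally convex, i.e. Banach) subsymmetric sequence space. -/
structure SubsymmetricSpace where
  mem : (ℕ → ℝ) → Prop
  nrm : (ℕ → ℝ) → ℝ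
  zero_mem : mem 0
  add_mem : ∀ {f g}, mem f → mem g → mem (f + g)
  smul_mem : ∀ (a : ℝ) {f}, mem f → mem (a • f)
  nrm_nonneg : ∀ f, 0 ≤ nrm f
  nrm_eq_zero : ∀ {f}, mem f → (nrm f = 0 ↔ f = 0)
  nrm_smul : ∀ (a : ℝ) (f : ℕ → ℝ), nrm (a • f) = |a| * nrm f
  nrm_triangle : ∀ {f g}, mem f → mem g → nrm (f + g) ≤ nrm f + nrm g
  complete : ∀ u : ℕ → (ℕ → ℝ), (∀ n, mem (u n)) → QCauchy nrm u →
    ∃ f, mem f ∧ QTendsto nrm u f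
  unit_mem : ∀ n, mem (unitVec n)
  unit_basis : ∀ f, mem f →
    QTendsto nrm (fun m => fun j => if j < m then f j else 0) f
  subsym : ∀ {f}, mem f → ∀ (ε : ℕ → ℝ), (∀ n, |ε n| = 1) → ∀ φ : ℕ → ℕ, StrictMono φ →
    mem (spread φ ε f) ∧ nrm (spread φ ε f) = nrm f

/-- Fundamental function of (the unit vector system of) a subsymmetric sequence space. -/
def SubsymmetricSpace.Lam (S : SubsymmetricSpace) (m : ℕ) : ℝ := S.nrm (indic m)

/-- The dual fundamental function `Λ*_m = m / Λ_m`. -/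
def SubsymmetricSpace.LamStar (S : SubsymmetricSpace) (m : ℕ) : ℝ := (m : ℝ) / S.Lam m

/-- Lower regularity property of a sequence of positive reals (indexed by `m ≥ 1`). -/
def LRP (Γ : ℕ → ℝ) : Prop := ∃ b : ℕ, 0 < b ∧ ∀ m : ℕ, 1 ≤ m → 2 * Γ m ≤ Γ (b * m)

/-- Upper regularity property. -/
def URP (Γ : ℕ → ℝ) : Prop := ∃ b : ℕ, 0 < b ∧ ∀ m : ℕ, 1 ≤ m → 2 * Γ (b * m) ≤ (b : ℝ) * Γ m

/-- Superreflexivity of a subsymmetric sequence space: it admits an equivalent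
uniformly convex norm. -/
def SubsymmetricSpace.Superreflexive (S : SubsymmetricSpace) : Prop :=
  ∃ nrm' : (ℕ → ℝ) → ℝ,
    (∀ f, S.mem f → 0 ≤ nrm' f) ∧
    (∀ (a : ℝ) (f), S.mem f → nrm' (a • f) = |a| * nrm' f) ∧
    (∀ f g, S.mem f → S.mem g → nrm' (f + g) ≤ nrm' f + nrm' g) ∧
    (∃ c C : ℝ, 0 < c ∧ ∀ f, S.mem f → c * S.nrm f ≤ nrm' f ∧ nrm' f ≤ C * S.nrm f) ∧
    (∀ ε : ℝ, 0 < ε → ∃ δ : ℝ, 0 < δ ∧ ∀ f g, S.mem f → S.mem g →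
      nrm' f ≤ 1 → nrm' g ≤ 1 → ε ≤ nrm' (f - g) → nrm' (f + g) ≤ 2 * (1 - δ))

/-! ### Upper and lower estimates -/

/-- A finite family with pairwise disjoint supports. -/
def DisjFam {ι : Type*} (F : ι → (ℕ → ℝ)) (J : Finset ι) : Prop :=
  ∀ i ∈ J, ∀ j ∈ J, i ≠ j → ∀ k, F i k = 0 ∨ F j k = 0

/-- `(Σ_{i∈J} |g i|^q)^{1/q}`, interpreted as `max_{i∈J} |g i|` when `q = ∞`. -/
def estNorm (q : ℝ≥0∞) {ι : Type*} (J : Finset ι) (g : ι → ℝ) : ℝ :=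
  if q = ⊤ then ((J.sup fun i => Real.toNNReal |g i| : NNReal) : ℝ)
  else (∑ i ∈ J, |g i| ^ q.toReal) ^ (1 / q.toReal)

/-- Upper `s`-estimate for a subsymmetric space (`s` finite). -/
def SubsymmetricSpace.UpperEst (S : SubsymmetricSpace) (s : ℝ) : Prop :=
  ∃ C : ℝ, ∀ (J : Finset ℕ) (F : ℕ → (ℕ → ℝ)), (∀ i ∈ J, S.mem (F i)) → DisjFam F J →
    S.nrm (∑ i ∈ J, F i) ≤ C * (∑ i ∈ J, S.nrm (F i) ^ s) ^ (1 / s)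

/-- Lower `q`-estimate for a subsymmetric space (`q` finite). -/
def SubsymmetricSpace.LowerEst (S : SubsymmetricSpace) (q : ℝ) : Prop :=
  ∃ C : ℝ, ∀ (J : Finset ℕ) (F : ℕ → (ℕ → ℝ)), (∀ i ∈ J, S.mem (F i)) → DisjFam F J →
    (∑ i ∈ J, S.nrm (F i) ^ q) ^ (1 / q) ≤ C * S.nrm (∑ i ∈ J, F i)

/-- Lower `q`-estimate, `q ∈ (0, ∞]`. -/
def SubsymmetricSpace.LowerEstE (S : SubsymmetricSpace) (q : ℝ≥0∞) : Prop :=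
  ∃ C : ℝ, ∀ (J : Finset ℕ) (F : ℕ → (ℕ → ℝ)), (∀ i ∈ J, S.mem (F i)) → DisjFam F J →
    estNorm q J (fun i => S.nrm (F i)) ≤ C * S.nrm (∑ i ∈ J, F i)

/-! ### Squeeze-symmetry -/

/-- The system is squeezed between the symmetric spaces `S₁` and `S₂`: the series
transform is bounded from `S₁` (on finitely supported vectors) and the coefficient
transform is bounded into `S₂`. -/
def BioSystem.SqueezedBetween (b : BioSystem mem nrm) (S₁ S₂ : SymmetricSpace) : Prop :=
  (∃ C : ℝ, ∀ a : ℕ →₀ ℝ, S₁.mem ⇑a →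
    nrm (∑ n ∈ a.support, a n • b.vec n) ≤ C * S₁.nrm ⇑a) ∧
  (∃ C : ℝ, ∀ f, mem f → S₂.mem (fun n => b.coord n f) ∧
    S₂.nrm (fun n => b.coord n f) ≤ C * nrm f)

/-- Squeeze-symmetric system: squeezed between two symmetric spaces with
equivalent fundamental functions. -/
def BioSystem.SqueezeSymmetric (b : BioSystem mem nrm) : Prop :=
  ∃ S₁ S₂ : SymmetricSpace, b.SqueezedBetween S₁ S₂ ∧
    ∃ c C : ℝ, 0 < c ∧ ∀ m : ℕ, 1 ≤ m →
      c * S₂.Lam m ≤ S₁.Lam m ∧ S₁.Lam m ≤ C * S₂.Lam m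

/-! ### Ordered partitions and the Dilworth–Kalton–Kutzarova construction -/

/-- An ordered partition of `ℕ` into (finite, nonempty) integer intervals. -/
structure OrderedPartition where
  part : ℕ → Finset ℕ
  nonempty : ∀ n, (part n).Nonempty
  ordered : ∀ n, ∀ i ∈ part n, ∀ j ∈ part (n + 1), i < j
  covers : ∀ k : ℕ, ∃ n, k ∈ part n

def OrderedPartition.N (σ : OrderedPartition) (n : ℕ) : ℕ := (σ.part n).card

def OrderedPartition.M (σ : OrderedPartition) (r : ℕ) : ℕ := ∑ n ∈ Finset.range r, σ.N n

/-- The averaging projection `P_σ`. -/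
def OrderedPartition.Pavg (σ : OrderedPartition) (f : ℕ → ℝ) : ℕ → ℝ := fun j =>
  if h : ∃ n, j ∈ σ.part n then
    (∑ i ∈ σ.part h.choose, f i) / ((σ.part h.choose).card : ℝ)
  else 0

/-- The complementary projection `Q_σ = Id - P_σ`. -/
def OrderedPartition.Qavg (σ : OrderedPartition) (f : ℕ → ℝ) : ℕ → ℝ := f - σ.Pavg f

/-- The functionals `v_n* = (Λ*_{N_n})⁻¹ Σ_{j∈σ_n} e_j*`. -/
def vstar (S : SubsymmetricSpace) (σ : OrderedPartition) (n : ℕ) (f : ℕ → ℝ) : ℝ :=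
  (S.Lam (σ.N n) / (σ.N n : ℝ)) * ∑ j ∈ σ.part n, f j

/-- The map `H(f) = Σ_n v_n*(f) x_n`. -/
def Hmap {X : Type*} [AddCommGroup X] [Module ℝ X] (B : QuasiBanach X) (b : QBasis B)
    (S : SubsymmetricSpace) (σ : OrderedPartition) (f : ℕ → ℝ) : X :=
  ∑ᶠ n, vstar S σ n f • b.vec n

/-- The quasi-norm `‖f‖ = ‖Q_σ f‖_S + ‖H f‖_X` on finitely supported sequences,
whose completion is the space `𝕐[𝒳,𝕊,σ]`. -/
def YNorm {X : Type*} [AddCommGroup X] [Module ℝ X] (B : QuasiBanach X) (b : QBasis B)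
    (S : SubsymmetricSpace) (σ : OrderedPartition) (f : ℕ → ℝ) : ℝ :=
  S.nrm (σ.Qavg f) + B.q (Hmap B b S σ f)

/-! ### Concrete sequence spaces -/

/-- Membership in `ℓ_p`, `0 < p < ∞`. -/
def lpMem (p : ℝ) (f : ℕ → ℝ) : Prop := Summable fun n => |f n| ^ p

/-- The `ℓ_p` quasi-norm, `0 < p < ∞`. -/
def lpNrm (p : ℝ) (f : ℕ → ℝ) : ℝ := (∑' n, |f n| ^ p) ^ (1 / p)

/-- Membership in `ℓ_p` for extended `p` (where `ℓ_∞` means `c₀`). -/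
def lpMemE (p : ℝ≥0∞) (f : ℕ → ℝ) : Prop :=
  if p = ⊤ then Filter.Tendsto f Filter.atTop (nhds 0) else lpMem p.toReal f

/-- The `ℓ_p` quasi-norm for extended `p`. -/
def lpNrmE (p : ℝ≥0∞) (f : ℕ → ℝ) : ℝ :=
  if p = ⊤ then ⨆ n, |f n| else lpNrm p.toReal f

/-- Membership in the matrix space `Z_{p,q} = ℓ_q(ℓ_p)` (with `ℓ_∞` meaning `c₀`). -/
def ZMem (p q : ℝ≥0∞) (f : ℕ → ℕ → ℝ) : Prop :=
  (∀ n, lpMemE p (f n)) ∧ lpMemE q (fun n => lpNrmE p (f n))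

/-- The quasi-norm of `Z_{p,q} = ℓ_q(ℓ_p)`. -/
def ZNrm (p q : ℝ≥0∞) (f : ℕ → ℕ → ℝ) : ℝ := lpNrmE q (fun n => lpNrmE p (f n))



/-! ### Quasi-norm geometric sums and uniform boundedness -/

theorem geo_fin {Z : Type*} [AddCommGroup Z] (q : Z → ℝ) (κ : ℝ) (hκ : 1 ≤ κ) (h0 : q 0 = 0)
    (ht : ∀ x y, q (x + y) ≤ κ * (q x + q y)) (η : ℝ) (hη0 : 0 < η) (hη1 : η < 1) (L : ℕ) :
    ∃ T : ℝ, 0 ≤ T ∧ ∀ a : ℝ, 0 ≤ a → ∀ y : ℕ → Z, (∀ i, q (y i) ≤ a * η ^ i) →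
      ∀ n, n ≤ L → q (∑ i ∈ Finset.range n, y i) ≤ T * a := by
  induction L with
  | zero =>
    refine ⟨0, le_rfl, fun a ha y hy n hn => ?_⟩
    have : n = 0 := by omega
    subst this
    simp [h0]
  | succ L ih =>
    obtain ⟨T, hT, h⟩ := ih
    refine ⟨κ * (T + 1), by positivity, fun a ha y hy n hn => ?_⟩
    rcases Nat.lt_or_ge L n with hl | hl
    · have : n = L + 1 := by omega
      subst this
      rw [Finset.sum_range_succ]
      have h1 := h a ha y hy L le_rfl
      have h2 : q (y L) ≤ a := (hy L).trans (by
        have := pow_le_one₀ (n := L) hη0.le hη1.le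
        nlinarith)
      calc _ ≤ κ * (q (∑ i ∈ Finset.range L, y i) + q (y L)) := ht _ _
        _ ≤ κ * (T * a + a) := by gcongr
        _ = _ := by ring
    · have h1 := h a ha y hy n hl
      have : T ≤ κ * (T + 1) := by nlinarith
      exact h1.trans (by gcongr)

theorem geo_sum {Z : Type*} [AddCommGroup Z] (q : Z → ℝ) (κ : ℝ) (hκ : 1 ≤ κ) (h0 : q 0 = 0)
    (ht : ∀ x y, q (x + y) ≤ κ * (q x + q y)) (η : ℝ) (hη0 : 0 < η) (hη1 : η < 1) :
    ∃ K : ℝ, 0 ≤ K ∧ ∀ a : ℝ, 0 ≤ a → ∀ y : ℕ → Z, (∀ i, q (y i) ≤ a * η ^ i) →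
      ∀ n, q (∑ i ∈ Finset.range n, y i) ≤ K * a := by
  obtain ⟨L, hL⟩ := exists_pow_lt_of_lt_one (show (0 : ℝ) < 1 / (2 * κ) by positivity) hη1
  have hL' : κ * η ^ L ≤ 1 / 2 := by
    rw [lt_div_iff₀ (by positivity)] at hL
    linarith
  obtain ⟨T, hT, h⟩ := geo_fin q κ hκ h0 ht η hη0 hη1 L
  have hLpos : 0 < L := by
    rcases Nat.eq_zero_or_pos L with h | h
    · subst h; simp at hL'; linarith
    · exact h
  refine ⟨2 * κ * T, by positivity, fun a ha y hy n => ?_⟩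
  induction n using Nat.strong_induction_on generalizing a y with
  | _ n ih =>
    rcases Nat.lt_or_ge L n with hl | hl
    · obtain ⟨m, rfl⟩ := Nat.exists_eq_add_of_le hl.le
      rw [Finset.sum_range_add]
      have h1 := h a ha y hy L le_rfl
      have h2 := ih m (by omega) (a * η ^ L) (by positivity) (fun i => y (L + i)) (fun i => by
        refine (hy (L + i)).trans (le_of_eq ?_)
        rw [pow_add]; ring)
      calc _ ≤ κ * (q (∑ i ∈ Finset.range L, y i) + q (∑ i ∈ Finset.range m, y (L + i))) := ht _ _
        _ ≤ κ * (T * a + 2 * κ * T * (a * η ^ L)) := by gcongr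
        _ = κ * T * a + 2 * κ * T * a * (κ * η ^ L) := by ring
        _ ≤ κ * T * a + 2 * κ * T * a * (1 / 2) := by gcongr
        _ = _ := by ring
    · have h1 := h a ha y hy n hl
      have : T ≤ 2 * κ * T := by nlinarith
      exact h1.trans (by gcongr)

/-- Version where the summation starts at `r`. -/
theorem geo_sum_shift {Z : Type*} [AddCommGroup Z] (q : Z → ℝ) (κ : ℝ) (hκ : 1 ≤ κ) (h0 : q 0 = 0)
    (ht : ∀ x y, q (x + y) ≤ κ * (q x + q y)) (η : ℝ) (hη0 : 0 < η) (hη1 : η < 1) :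
    ∃ K : ℝ, 0 ≤ K ∧ ∀ a : ℝ, 0 ≤ a → ∀ (r : ℕ) (y : ℕ → Z), (∀ i, i < r → y i = 0) →
      (∀ i, q (y (r + i)) ≤ a * η ^ i) →
      ∀ n, q (∑ i ∈ Finset.range n, y i) ≤ K * a := by
  obtain ⟨K, hK, h⟩ := geo_sum q κ hκ h0 ht η hη0 hη1
  refine ⟨K, hK, fun a ha r y hy0 hy n => ?_⟩
  rcases Nat.lt_or_ge n r with hl | hl
  · rw [Finset.sum_eq_zero (fun i hi => hy0 i (by simp at hi; omega)), h0]
    positivity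
  · obtain ⟨m, rfl⟩ := Nat.exists_eq_add_of_le hl
    rw [Finset.sum_range_add, Finset.sum_eq_zero (fun i hi => hy0 i (by simpa using hi)), zero_add]
    exact h a ha (fun i => y (r + i)) hy m

theorem QuasiBanach.q_zero {X : Type*} [AddCommGroup X] [Module ℝ X] (B : QuasiBanach X) :
    B.q 0 = 0 := (B.q_eq_zero_iff 0).2 rfl

theorem QuasiBanach.q_neg {X : Type*} [AddCommGroup X] [Module ℝ X] (B : QuasiBanach X) (x : X) :
    B.q (-x) = B.q x := by
  have := B.q_smul (-1) x
  simpa using this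

theorem QuasiBanach.q_sub_comm {X : Type*} [AddCommGroup X] [Module ℝ X] (B : QuasiBanach X)
    (x y : X) : B.q (x - y) = B.q (y - x) := by
  rw [← B.q_neg, neg_sub]

/-- If `w` is bounded with some constant but not with `R`, there is an almost optimal constant. -/
theorem exists_almost_opt {X : Type*} (q w : X → ℝ) (hq : ∀ x, 0 ≤ q x) (R : ℝ) (hR : 0 < R)
    (hb : ∃ C, ∀ x, w x ≤ C * q x) (hnb : ∃ x, R * q x < w x) :
    ∃ W, R ≤ W ∧ (∀ x, w x ≤ W * q x) ∧ ∃ x, W / 2 * q x < w x := by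
  obtain ⟨C, hC⟩ := hb
  have hex : ∃ i : ℕ, ∃ x, C / 2 ^ i * q x < w x := by
    obtain ⟨x, hx⟩ := hnb
    obtain ⟨i, hi⟩ := pow_unbounded_of_one_lt (C / R) (one_lt_two)
    refine ⟨i, x, lt_of_le_of_lt ?_ hx⟩
    gcongr
    · exact hq x
    · rw [div_lt_iff₀ hR] at hi
      rw [div_le_iff₀ (by positivity)]
      linarith
  have h0 : Nat.find hex ≠ 0 := by
    intro h
    obtain ⟨x, hx⟩ := Nat.find_spec hex
    rw [h] at hx
    have := hC x
    simp at hx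
    linarith
  obtain ⟨i, hi⟩ := Nat.exists_eq_succ_of_ne_zero h0
  have hspec := Nat.find_spec hex
  have hmin := Nat.find_min hex (m := i) (by omega)
  push Not at hmin
  rw [hi] at hspec
  refine ⟨C / 2 ^ i, ?_, hmin, ?_⟩
  · obtain ⟨x, hx⟩ := hnb
    by_contra hlt
    push Not at hlt
    have := hmin x
    nlinarith [hq x]
  · obtain ⟨x, hx⟩ := hspec
    refine ⟨x, ?_⟩
    rw [pow_succ] at hx
    rwa [div_div]

/-- Uniform boundedness principle for quasi-seminorms on a quasi-Banach space. -/
theorem ubp {X : Type*} [AddCommGroup X] [Module ℝ X] (B : QuasiBanach X) (w : ℕ → X → ℝ)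
    (hsm : ∀ n (a : ℝ) x, w n (a • x) = |a| * w n x)
    (κ : ℝ) (hκB : B.kappa ≤ κ)
    (hwt : ∀ n x y, w n (x + y) ≤ κ * (w n x + w n y))
    (hb : ∀ n, ∃ C, ∀ x, w n x ≤ C * B.q x)
    (hpt : ∀ x, ∃ C, ∀ n, w n x ≤ C) :
    ∃ C, ∀ n x, w n x ≤ C * B.q x := by
  by_contra hcon
  push Not at hcon
  have hκ : 1 ≤ κ := B.one_le_kappa.trans hκB
  have hqt : ∀ x y, B.q (x + y) ≤ κ * (B.q x + B.q y) := fun x y =>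
    (B.q_triangle x y).trans (by
      have := B.q_nonneg x
      have := B.q_nonneg y
      gcongr)
  have hw0 : ∀ n, w n 0 = 0 := fun n => by simpa using hsm n 0 0
  have hwneg : ∀ n x, w n (-x) = w n x := fun n x => by simpa using hsm n (-1) x
  have hwnn : ∀ n x, 0 ≤ w n x := fun n x => by
    have := hwt n x (-x)
    rw [add_neg_cancel, hw0, hwneg] at this
    nlinarith
  -- geometric sum with ratio 1/2
  set θ : ℝ := 1 / (12 * κ ^ 4) with hθ
  have hκ4 : 1 ≤ κ ^ 4 := one_le_pow₀ hκ
  have hθ0 : 0 < θ := by positivity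
  have hκθ4 : κ ^ 4 * θ = 1 / 12 := by rw [hθ]; field_simp
  have hκκ4 : κ ≤ κ ^ 4 := le_self_pow₀ hκ (by norm_num)
  have hκθ : κ * θ ≤ 1 / 12 := by rw [← hκθ4]; gcongr
  -- choose n_k, W_k, ξ_k
  have hch : ∀ k : ℕ, ∃ (n : ℕ) (W : ℝ) (ξ : X), ((k : ℝ) + 1) * (4 * κ ^ 2) / θ ^ k ≤ W ∧
      (∀ x, w n x ≤ W * B.q x) ∧ B.q ξ = θ ^ k ∧ W / 2 * θ ^ k ≤ w n ξ := by
    intro k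
    obtain ⟨n, x, hx⟩ := hcon (((k : ℝ) + 1) * (4 * κ ^ 2) / θ ^ k)
    obtain ⟨W, hRW, hW, x, hx⟩ := exists_almost_opt B.q (w n) B.q_nonneg _ (by positivity)
      (hb n) ⟨x, hx⟩
    have hqx : 0 < B.q x := by
      rcases (B.q_nonneg x).lt_or_eq with h | h
      · exact h
      · rw [(B.q_eq_zero_iff x).1 h.symm, hw0, B.q_zero] at hx
        simp at hx
    refine ⟨n, W, (θ ^ k / B.q x) • x, hRW, hW, ?_, ?_⟩
    · rw [B.q_smul, abs_of_nonneg (by positivity)]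
      field_simp
    · rw [hsm, abs_of_nonneg (by positivity)]
      calc W / 2 * θ ^ k = θ ^ k / B.q x * (W / 2 * B.q x) := by field_simp
        _ ≤ _ := by gcongr
  choose n W ξ hRW hW hξ hwξ using hch
  -- choose signs
  have hsign : ∀ (k : ℕ) (x : X), ∃ s : ℝ, |s| = 1 ∧ w (n k) (ξ k) ≤ κ * w (n k) (x + s • ξ k) := by
    intro k x
    have h1 := hwt (n k) (x + (1 : ℝ) • ξ k) (-(x + (-1 : ℝ) • ξ k))
    have h2 : x + (1 : ℝ) • ξ k + (-(x + (-1 : ℝ) • ξ k)) = (2 : ℝ) • ξ k := by module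
    rw [h2, hsm, hwneg, abs_of_pos (by norm_num)] at h1
    by_contra hno
    push Not at hno
    have h3 := hno 1 (by simp)
    have h4 := hno (-1) (by simp)
    linarith
  choose s hs1 hs2 using hsign
  let u : ℕ → X := fun k => Nat.rec 0 (fun k x => x + s k x • ξ k) k
  have hu : ∀ k, u (k + 1) = u k + s k (u k) • ξ k := fun k => rfl
  have hstep : ∀ k, B.q (s k (u k) • ξ k) = θ ^ k := fun k => by rw [B.q_smul, hs1, one_mul, hξ]
  have hdiff : ∀ m k, B.q (u (k + m) - u k) ≤ 2 * κ * θ ^ k := by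
    intro m
    induction m with
    | zero => intro k; simp [B.q_zero]; positivity
    | succ m ih =>
      intro k
      have h1 : u (k + (m + 1)) - u k = (s k (u k) • ξ k) + (u (k + 1 + m) - u (k + 1)) := by
        rw [hu k, show k + (m + 1) = k + 1 + m by ring]; abel
      rw [h1]
      calc _ ≤ κ * (B.q (s k (u k) • ξ k) + B.q (u (k + 1 + m) - u (k + 1))) := hqt _ _
        _ ≤ κ * (θ ^ k + 2 * κ * θ ^ (k + 1)) := by
          rw [hstep]
          have := ih (k + 1)
          gcongr
        _ = κ * θ ^ k * (1 + 2 * (κ * θ)) := by ring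
        _ ≤ κ * θ ^ k * (1 + 2 * (1 / 12)) := by gcongr
        _ ≤ _ := by nlinarith [show 0 < κ * θ ^ k by positivity]
  have hθ1 : θ < 1 := by nlinarith
  have hcau : QCauchy B.q u := by
    intro ε hε
    obtain ⟨N, hN⟩ := exists_pow_lt_of_lt_one (show (0 : ℝ) < ε / (4 * κ ^ 2) by positivity) hθ1
    refine ⟨N, fun a ha b hb => ?_⟩
    obtain ⟨a, rfl⟩ := Nat.exists_eq_add_of_le ha
    obtain ⟨b, rfl⟩ := Nat.exists_eq_add_of_le hb
    have h1 := hdiff a N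
    have h2 := hdiff b N
    rw [B.q_sub_comm] at h2
    have h3 := hqt (u (N + a) - u N) (u N - u (N + b))
    rw [sub_add_sub_cancel] at h3
    rw [lt_div_iff₀ (by positivity)] at hN
    calc _ ≤ _ := h3
      _ ≤ κ * (2 * κ * θ ^ N + 2 * κ * θ ^ N) := by gcongr
      _ < _ := by linarith
  obtain ⟨x, hx⟩ := B.complete u hcau
  have hlim : ∀ k, B.q (u k - x) ≤ 3 * κ ^ 2 * θ ^ k := by
    intro k
    obtain ⟨n₀, hn₀⟩ := hx (κ * θ ^ k) (by positivity)
    have h1 := hn₀ (k + n₀) (by omega)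
    have h2 := hdiff n₀ k
    rw [B.q_sub_comm] at h2
    have h3 := hqt (u k - u (k + n₀)) (u (k + n₀) - x)
    rw [sub_add_sub_cancel] at h3
    calc _ ≤ _ := h3
      _ ≤ κ * (2 * κ * θ ^ k + κ * θ ^ k) := by gcongr
      _ = _ := by ring
  obtain ⟨C, hC⟩ := hpt x
  obtain ⟨k, hk⟩ := exists_nat_gt C
  have h1 := hs2 k (u k)
  rw [← hu] at h1
  have h2 := hwt (n k) x (u (k + 1) - x)
  rw [add_sub_cancel] at h2
  have hWp : 0 ≤ W k := le_trans (by positivity) (hRW k)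
  have h3 : w (n k) (u (k + 1) - x) ≤ W k * (3 * κ ^ 2 * θ ^ (k + 1)) :=
    (hW k _).trans (by have := hlim (k + 1); gcongr)
  have h4 := hwξ k
  have h5 : W k / 2 * θ ^ k ≤ κ ^ 2 * w (n k) x + W k * θ ^ k / 4 := by
    calc W k / 2 * θ ^ k ≤ w (n k) (ξ k) := h4
      _ ≤ κ * w (n k) (u (k + 1)) := h1
      _ ≤ κ * (κ * (w (n k) x + W k * (3 * κ ^ 2 * θ ^ (k + 1)))) := by
        have : w (n k) (u (k + 1)) ≤ κ * (w (n k) x + W k * (3 * κ ^ 2 * θ ^ (k + 1))) :=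
          h2.trans (by gcongr)
        gcongr
      _ = κ ^ 2 * w (n k) x + 3 * W k * θ ^ k * (κ ^ 4 * θ) := by ring
      _ = _ := by rw [hκθ4]; ring
  have h6 := hRW k
  rw [div_le_iff₀ (by positivity)] at h6
  have h7 := hC (n k)
  have h8 : ((k : ℝ) + 1) * (4 * κ ^ 2) ≤ 4 * κ ^ 2 * w (n k) x := by nlinarith
  have h9 : (k : ℝ) + 1 ≤ w (n k) x := by
    by_contra hh
    push Not at hh
    have : 0 < κ ^ 2 := by positivity
    nlinarith
  linarith

/-- Partial sums of a Schauder basis are uniformly bounded. -/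
theorem basis_partial {X : Type*} [AddCommGroup X] [Module ℝ X] (B : QuasiBanach X)
    (b : QBasis B) : ∃ C, 0 ≤ C ∧ ∀ m x, 
      B.q (∑ n ∈ Finset.range m, b.coord n x • b.vec n) ≤ C * B.q x := by
  have hκ := B.one_le_kappa
  have key : ∃ C, ∀ m x, 
      B.q (∑ n ∈ Finset.range m, b.coord n x • b.vec n) ≤ C * B.q x := by
    refine ubp B (fun m x => B.q (∑ n ∈ Finset.range m, b.coord n x • b.vec n)) ?_ B.kappa le_rfl
      ?_ ?_ ?_
    · intro n a x
      rw [← B.q_smul, Finset.smul_sum]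
      congr 1
      refine Finset.sum_congr rfl fun i _ => ?_
      rw [b.coord_smul _ _ _ trivial, mul_smul]
    · intro n x y
      refine le_trans (le_of_eq ?_) (B.q_triangle _ _)
      congr 1
      rw [← Finset.sum_add_distrib]
      refine Finset.sum_congr rfl fun i _ => ?_
      rw [b.coord_add _ _ _ trivial trivial, add_smul]
    · intro n
      induction n with
      | zero => exact ⟨0, fun x => by simp [B.q_zero]⟩
      | succ n ih =>
        obtain ⟨C, hC⟩ := ih
        obtain ⟨D, hD⟩ := b.coord_bdd n
        refine ⟨B.kappa * (C + D * B.q (b.vec n)), fun x => ?_⟩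
        simp only [Finset.sum_range_succ]
        have h1 := hC x
        have h2 := hD x trivial
        have := B.q_nonneg (b.vec n)
        calc _ ≤ _ := B.q_triangle _ _
          _ ≤ B.kappa * (C * B.q x + D * B.q x * B.q (b.vec n)) := by
            rw [B.q_smul]
            gcongr
          _ = _ := by ring
    · intro x
      obtain ⟨n₀, hn₀⟩ := b.expansion x trivial 1 one_pos
      refine ⟨B.kappa * (1 + B.q x) +
        ∑ m ∈ Finset.range n₀, B.q (∑ n ∈ Finset.range m, b.coord n x • b.vec n), fun m => ?_⟩
      have hs : 0 ≤ ∑ m ∈ Finset.range n₀,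
          B.q (∑ n ∈ Finset.range m, b.coord n x • b.vec n) :=
        Finset.sum_nonneg fun i _ => B.q_nonneg _
      have hp : 0 ≤ B.kappa * (1 + B.q x) := by have := B.q_nonneg x; positivity
      rcases Nat.lt_or_ge m n₀ with h | h
      · have := Finset.single_le_sum (f := fun m => 
          B.q (∑ n ∈ Finset.range m, b.coord n x • b.vec n)) (fun i _ => B.q_nonneg _)
          (Finset.mem_range.2 h)
        linarith
      · have h1 := hn₀ m h
        have h2 := B.q_triangle ((∑ n ∈ Finset.range m, b.coord n x • b.vec n) - x) x
        rw [sub_add_cancel] at h2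
        nlinarith
  obtain ⟨C, hC⟩ := key
  refine ⟨max C 0, le_max_right _ _, fun m x => (hC m x).trans ?_⟩
  have := B.q_nonneg x
  gcongr
  exact le_max_left _ _

theorem basis_coord {X : Type*} [AddCommGroup X] [Module ℝ X] (B : QuasiBanach X)
    (b : QBasis B) (hs : b.toBioSystem.SemiNormalized) :
    ∃ C, 0 ≤ C ∧ ∀ n x, |b.coord n x| ≤ C * B.q x := by
  obtain ⟨c, C', hc, hcC⟩ := hs
  obtain ⟨C, hC0, hC⟩ := basis_partial B b
  have hκ := B.one_le_kappa
  refine ⟨B.kappa * (2 * C) / c, by positivity, fun n x => ?_⟩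
  have h1 := B.q_triangle (∑ n ∈ Finset.range (n + 1), b.coord n x • b.vec n)
    (-(∑ n ∈ Finset.range n, b.coord n x • b.vec n))
  rw [Finset.sum_range_succ, B.q_neg, ← sub_eq_add_neg, add_sub_cancel_left, B.q_smul,
    ← Finset.sum_range_succ] at h1
  have h2 := hC (n + 1) x
  have h3 := hC n x
  have h4 := (hcC n).1
  have h5 := B.q_nonneg x
  rw [div_mul_eq_mul_div, le_div_iff₀ hc]
  calc |b.coord n x| * c ≤ |b.coord n x| * B.q (b.vec n) := by gcongr
    _ ≤ _ := h1
    _ ≤ B.kappa * (C * B.q x + C * B.q x) := by gcongr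
    _ = _ := by ring

/-! ### Subsymmetric spaces -/

/-- Finitely supported sequences. -/
def FS (f : ℕ → ℝ) : Prop := ∃ m, ∀ j, m ≤ j → f j = 0

theorem FS.add {f g : ℕ → ℝ} (hf : FS f) (hg : FS g) : FS (f + g) := by
  obtain ⟨m, hm⟩ := hf
  obtain ⟨n, hn⟩ := hg
  exact ⟨max m n, fun j hj => by simp [hm j (le_of_max_le_left hj), hn j (le_of_max_le_right hj)]⟩

theorem FS.mono {f g : ℕ → ℝ} (hg : FS g) (h : ∀ j, g j = 0 → f j = 0) : FS f := by
  obtain ⟨n, hn⟩ := hg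
  exact ⟨n, fun j hj => h j (hn j hj)⟩

theorem FS.smul {f : ℕ → ℝ} (a : ℝ) (hf : FS f) : FS (a • f) :=
  hf.mono fun j hj => by simp [hj]

theorem FS.sub {f g : ℕ → ℝ} (hf : FS f) (hg : FS g) : FS (f - g) := by
  rw [sub_eq_add_neg]
  exact hf.add (hg.mono fun j hj => by simp [hj])

theorem FS.zero : FS 0 := ⟨0, fun _ _ => rfl⟩

theorem FS.sum {ι : Type*} (J : Finset ι) (F : ι → ℕ → ℝ) (h : ∀ i ∈ J, FS (F i)) :
    FS (∑ i ∈ J, F i) := by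
  induction J using Finset.induction_on with
  | empty => simpa using FS.zero
  | insert a s ha ih =>
    rw [Finset.sum_insert ha]
    exact (h a (by simp)).add (ih fun i hi => h i (by simp [hi]))

/-- Restriction of a sequence to a finite set. -/
def res (A : Finset ℕ) (f : ℕ → ℝ) : ℕ → ℝ := fun j => if j ∈ A then f j else 0

theorem FS.res (A : Finset ℕ) (f : ℕ → ℝ) : FS (res A f) :=
  ⟨A.sup id + 1, fun j hj => by
    have : j ∉ A := fun h => by
      have := Finset.le_sup (f := id) h
      simp only [id] at this
      omega
    simp [AGpaper.res, this]⟩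

theorem FS.indic (m : ℕ) : FS (indic m) := ⟨m, fun j hj => by simp [AGpaper.indic, hj]⟩

namespace SubsymmetricSpace
variable (S : SubsymmetricSpace)

theorem mem_sum {ι : Type*} (J : Finset ι) (F : ι → ℕ → ℝ) (h : ∀ i ∈ J, S.mem (F i)) :
    S.mem (∑ i ∈ J, F i) := by
  induction J using Finset.induction_on with
  | empty => simpa using S.zero_mem
  | insert a s ha ih =>
    rw [Finset.sum_insert ha]
    exact S.add_mem (h a (by simp)) (ih fun i hi => h i (by simp [hi]))

theorem nrm_zero : S.nrm 0 = 0 := (S.nrm_eq_zero S.zero_mem).2 rfl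

theorem nrm_sum {ι : Type*} (J : Finset ι) (F : ι → ℕ → ℝ) (h : ∀ i ∈ J, S.mem (F i)) :
    S.nrm (∑ i ∈ J, F i) ≤ ∑ i ∈ J, S.nrm (F i) := by
  induction J using Finset.induction_on with
  | empty => simp [S.nrm_zero]
  | insert a s ha ih =>
    rw [Finset.sum_insert ha, Finset.sum_insert ha]
    have h1 := ih fun i hi => h i (by simp [hi])
    have h2 := S.nrm_triangle (h a (by simp)) (S.mem_sum s F fun i hi => h i (by simp [hi]))
    linarith

theorem mem_of_fs {f : ℕ → ℝ} (hf : FS f) : S.mem f := by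
  obtain ⟨m, hm⟩ := hf
  have : f = ∑ i ∈ Finset.range m, f i • unitVec i := by
    funext j
    simp only [Finset.sum_apply, Pi.smul_apply, unitVec, smul_eq_mul, mul_ite, mul_one, mul_zero]
    rw [Finset.sum_ite_eq]
    split_ifs with h
    · rfl
    · exact hm j (by simpa using h)
  rw [this]
  exact S.mem_sum _ _ fun i _ => S.smul_mem _ (S.unit_mem i)

theorem spread_apply (φ : ℕ → ℕ) (hφ : StrictMono φ) (ε f : ℕ → ℝ) (n : ℕ) :
    spread φ ε f (φ n) = ε n * f n := by
  have h : ∃ k, φ k = φ n := ⟨n, rfl⟩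
  have hk : h.choose = n := hφ.injective h.choose_spec
  unfold spread
  rw [dif_pos h, hk]

theorem spread_not (φ : ℕ → ℕ) (ε f : ℕ → ℝ) (j : ℕ) (h : ¬ ∃ n, φ n = j) :
    spread φ ε f j = 0 := by
  unfold spread
  rw [dif_neg h]

theorem sign_nrm {f : ℕ → ℝ} (hf : S.mem f) (ε : ℕ → ℝ) (hε : ∀ n, |ε n| = 1) :
    S.mem (fun j => ε j * f j) ∧ S.nrm (fun j => ε j * f j) = S.nrm f := by
  have := S.subsym hf ε hε id strictMono_id
  have h : spread id ε f = fun j => ε j * f j := by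
    funext j
    exact spread_apply id strictMono_id ε f j
  rwa [h] at this

theorem nrm_comp {u v : ℕ → ℝ} (hu : FS u) (φ : ℕ → ℕ) (hφ : StrictMono φ)
    (h1 : ∀ n, v (φ n) = u n) (h2 : ∀ j, (¬ ∃ n, φ n = j) → v j = 0) : S.nrm v = S.nrm u := by
  have := (S.subsym (S.mem_of_fs hu) (fun _ => 1) (by simp) φ hφ).2
  rw [← this]
  congr 1
  funext j
  by_cases h : ∃ n, φ n = j
  · obtain ⟨n, rfl⟩ := h
    rw [spread_apply φ hφ, h1, one_mul]
  · rw [spread_not _ _ _ _ h, h2 j h]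

theorem lat_aux {g : ℕ → ℝ} (hg : S.mem g) (t : ℕ → ℝ) (ht : ∀ j, |t j| ≤ 1) (F : Finset ℕ) :
    S.mem (fun j => if j ∈ F then t j * g j else g j) ∧
    S.nrm (fun j => if j ∈ F then t j * g j else g j) ≤ S.nrm g := by
  induction F using Finset.induction_on with
  | empty => simpa using hg
  | insert a s ha ih =>
    obtain ⟨hm, hn⟩ := ih
    set u : ℕ → ℝ := fun j => if j ∈ s then t j * g j else g j with hu
    obtain ⟨h1, h2⟩ := S.sign_nrm hm (fun j => if j = a then -1 else 1)
      (fun n => by split_ifs <;> simp)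
    set v : ℕ → ℝ := fun j => (if j = a then -1 else 1) * u j with hv
    have heq : (fun j => if j ∈ insert a s then t j * g j else g j) =
        ((1 + t a) / 2) • u + ((1 - t a) / 2) • v := by
      funext j
      by_cases hj : j = a
      · subst hj
        simp [hu, hv, ha]
        ring
      · simp only [hu, hv, Finset.mem_insert, hj, false_or, Pi.add_apply, Pi.smul_apply,
          smul_eq_mul, if_false, one_mul]
        split_ifs <;> ring
    have hta := abs_le.1 (ht a)
    rw [heq]
    refine ⟨S.add_mem (S.smul_mem _ hm) (S.smul_mem _ h1), ?_⟩
    refine (S.nrm_triangle (S.smul_mem _ hm) (S.smul_mem _ h1)).trans ?_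
    rw [S.nrm_smul, S.nrm_smul, h2, abs_of_nonneg (by linarith), abs_of_nonneg (by linarith)]
    linarith

theorem lat {f g : ℕ → ℝ} (hg : FS g) (h : ∀ j, |f j| ≤ |g j|) : S.nrm f ≤ S.nrm g := by
  obtain ⟨m, hm⟩ := hg
  have := (S.lat_aux (S.mem_of_fs ⟨m, hm⟩) (fun j => f j / g j) (fun j => by
    rw [abs_div]
    exact div_le_one_of_le₀ (h j) (abs_nonneg _)) (Finset.range m)).2
  refine le_trans (le_of_eq ?_) this
  congr 1
  funext j
  have hz : g j = 0 → f j = 0 := fun hj => by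
    have := h j
    rw [hj] at this
    simpa using this
  split_ifs with hj
  · by_cases hgj : g j = 0
    · simp [hgj, hz hgj]
    · field_simp
  · have : g j = 0 := hm j (by simpa using hj)
    rw [this, hz this]

theorem compress (A : Finset ℕ) : ∃ φ : ℕ → ℕ, StrictMono φ ∧ (∀ i, φ i ∈ A ↔ i < A.card) ∧
    ∀ j ∈ A, ∃ i, φ i = j := by
  let e := A.orderEmbOfFin rfl
  have hle : ∀ i, e i ≤ A.sup id := fun i =>
    Finset.le_sup (f := id) (A.orderEmbOfFin_mem rfl i)
  refine ⟨fun i => if h : i < A.card then e ⟨i, h⟩ else A.sup id + 1 + i, ?_, ?_, ?_⟩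
  · intro i k hik
    by_cases h1 : i < A.card <;> by_cases h2 : k < A.card
    · simp only [h1, h2, dif_pos]
      exact e.strictMono (by simpa using hik)
    · simp only [h1, h2, dif_pos, dif_neg, not_false_eq_true]
      have := hle ⟨i, h1⟩
      omega
    · omega
    · simp only [h1, h2, dif_neg, not_false_eq_true]
      omega
  · intro i
    by_cases h1 : i < A.card
    · simp only [h1, dif_pos, iff_true]
      exact A.orderEmbOfFin_mem rfl _
    · simp only [h1, dif_neg, not_false_eq_true, iff_false]
      intro h
      have := Finset.le_sup (f := id) h
      simp only [id] at this
      omega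
  · intro j hj
    have : j ∈ Set.range e := by
      rw [Finset.range_orderEmbOfFin]
      exact hj
    obtain ⟨i, hi⟩ := this
    exact ⟨i, by simp [hi]⟩

/-- Compression of the restriction to `A`. -/
theorem res_compress (A : Finset ℕ) : ∃ φ : ℕ → ℕ, StrictMono φ ∧
    (∀ f : ℕ → ℝ, S.nrm (res A f) = S.nrm (res (Finset.range A.card) (f ∘ φ))) ∧
    (∀ f : ℕ → ℝ, ∑ i ∈ Finset.range A.card, f (φ i) = ∑ i ∈ A, f i) := by
  obtain ⟨φ, hφ, hA, hs⟩ := compress A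
  refine ⟨φ, hφ, fun f => ?_, fun f => ?_⟩
  · refine S.nrm_comp (FS.res _ _) φ hφ (fun n => ?_) (fun j hj => ?_)
    · simp [res, hA]
    · simp only [res]
      rw [if_neg]
      exact fun h => hj (hs j h)
  · refine Finset.sum_bij (fun i _ => φ i) (fun i hi => ?_) (fun i _ k _ h => hφ.injective h)
      (fun j hj => ?_) (fun _ _ => rfl)
    · rw [hA]; simpa using hi
    · obtain ⟨i, rfl⟩ := hs j hj
      exact ⟨i, by simpa using (hA i).1 hj, rfl⟩

theorem nrm_ind (A : Finset ℕ) : S.nrm (res A 1) = S.Lam A.card := by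
  obtain ⟨φ, hφ, h, -⟩ := S.res_compress A
  rw [h]
  unfold Lam
  congr 1
  funext j
  simp [res, indic]

theorem Lam_pos {m : ℕ} (hm : 1 ≤ m) : 0 < S.Lam m := by
  refine lt_of_le_of_ne (S.nrm_nonneg _) fun h => ?_
  have := (S.nrm_eq_zero (S.mem_of_fs (FS.indic m))).1 h.symm
  have := congrFun this 0
  simp [indic] at this
  omega

theorem Lam_nonneg (m : ℕ) : 0 ≤ S.Lam m := S.nrm_nonneg _

theorem Lam_mono {k m : ℕ} (h : k ≤ m) : S.Lam k ≤ S.Lam m := by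
  refine S.lat (FS.indic m) fun j => ?_
  unfold indic
  by_cases h1 : j < k
  · simp [h1, h1.trans_le h]
  · simp [h1]

theorem Lam_add (k m : ℕ) : S.Lam (k + m) ≤ S.Lam k + S.Lam m := by
  have h1 : S.nrm (fun j => if k ≤ j ∧ j < k + m then 1 else 0) = S.Lam m := by
    refine S.nrm_comp (FS.indic m) (fun i => k + i) (fun a b h => by simpa using h)
      (fun n => ?_) (fun j hj => ?_)
    · simp [indic]
    · rw [if_neg]
      rintro ⟨h1, h2⟩
      exact hj ⟨j - k, by omega⟩
  have h2 : indic (k + m) = indic k + (fun j => if k ≤ j ∧ j < k + m then 1 else 0) := by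
    funext j
    simp only [indic, Pi.add_apply]
    split_ifs <;> first | omega | simp
  have h3 : FS (fun j => if k ≤ j ∧ j < k + m then (1 : ℝ) else 0) :=
    ⟨k + m, fun j hj => if_neg (by omega)⟩
  rw [← h1]
  unfold Lam
  rw [h2]
  exact S.nrm_triangle (S.mem_of_fs (FS.indic k)) (S.mem_of_fs h3)

theorem Lam_mul (t k : ℕ) : S.Lam (t * k) ≤ t * S.Lam k := by
  induction t with
  | zero =>
    have : indic 0 = 0 := by funext j; simp [indic]
    simp [Lam, this, S.nrm_zero]
  | succ t ih =>
    rw [Nat.succ_mul]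
    have := S.Lam_add (t * k) k
    push_cast
    linarith

theorem rho_le {k N : ℕ} (hk : 1 ≤ k) (h : k ≤ N) : S.Lam N / N ≤ 2 * (S.Lam k / k) := by
  have h1 : N ≤ (N / k + 1) * k := by
    have := Nat.lt_div_mul_add (a := N) (b := k) (by omega)
    rw [add_mul]; omega
  have h2 := (S.Lam_mono h1).trans (S.Lam_mul _ _)
  have hk' : (0 : ℝ) < k := by exact_mod_cast hk
  have hN' : (0 : ℝ) < N := by exact_mod_cast (hk.trans h)
  have h3 : ((N / k : ℕ) : ℝ) ≤ N / k := Nat.cast_div_le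
  have h4 : (1 : ℝ) ≤ N / k := by
    rw [le_div_iff₀ hk']
    simpa using (by exact_mod_cast h : (k : ℝ) ≤ N)
  have h5 := S.Lam_nonneg k
  rw [div_le_iff₀ hN']
  push_cast at h2
  calc S.Lam N ≤ _ := h2
    _ ≤ (N / k + N / k) * S.Lam k := by gcongr
    _ = _ := by ring

/-- Hölder type inequality. -/
theorem holder {g : ℕ → ℝ} (hg : FS g) (A : Finset ℕ) :
    |∑ i ∈ A, g i| * S.Lam A.card ≤ 2 * A.card * S.nrm g := by
  obtain ⟨φ, hφ, hn, hsum⟩ := S.res_compress A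
  set k := A.card with hk
  -- the compressed vector, made non-negative
  set u : ℕ → ℝ := fun i => if i < k then |g (φ i)| else 0 with hu
  have hu0 : ∀ i, 0 ≤ u i := fun i => by simp only [hu]; split_ifs <;> simp
  have huk : ∀ i, k ≤ i → u i = 0 := fun i hi => by simp [hu, hi]
  have huFS : FS u := ⟨k, huk⟩
  have hug : S.nrm u ≤ S.nrm g := by
    have h1 : S.nrm u ≤ S.nrm (res (Finset.range k) (g ∘ φ)) := by
      refine S.lat (FS.res _ _) fun j => ?_
      by_cases h : j < k <;> simp [hu, res, h]
    rw [← hn] at h1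
    refine h1.trans (S.lat hg fun j => ?_)
    by_cases h : j ∈ A <;> simp [res, h]
  set T := ∑ i ∈ Finset.range k, u i with hT
  have hT0 : 0 ≤ T := Finset.sum_nonneg fun i _ => hu0 i
  have hsT : |∑ i ∈ A, g i| ≤ T := by
    rw [← hsum]
    refine (Finset.abs_sum_le_sum_abs _ _).trans (le_of_eq ?_)
    refine Finset.sum_congr rfl fun i hi => ?_
    have : i < k := by simpa using hi
    simp [hu, this]
  clear_value u
  -- shifts
  let sh : ℕ → ℕ → ℝ := fun s j => if s ≤ j then u (j - s) else 0
  have hshFS : ∀ s, FS (sh s) := fun s => ⟨s + k, fun j hj => by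
    simp only [sh]
    rw [if_pos (by omega), huk _ (by omega)]⟩
  have hsh : ∀ s, S.nrm (sh s) = S.nrm u := fun s => by
    refine S.nrm_comp huFS (fun i => s + i) (fun a b h => by simpa using h)
      (fun n => ?_) (fun j hj => ?_)
    · simp [sh]
    · simp only [sh]
      rw [if_neg]
      intro h1
      exact hj ⟨j - s, by omega⟩
  set w : ℕ → ℝ := ∑ s ∈ Finset.range k, sh s with hw
  have hwFS : FS w := FS.sum _ _ fun s _ => hshFS s
  have hwn : S.nrm w ≤ k * S.nrm u := by
    refine (S.nrm_sum _ _ fun s _ => S.mem_of_fs (hshFS s)).trans ?_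
    simp [hsh]
  have hlo : ∀ j, j < k → w j = ∑ i ∈ Finset.range k, if i ≤ j then u i else 0 := by
    intro j hj
    simp only [hw, Finset.sum_apply, sh]
    rw [← Finset.sum_filter, ← Finset.sum_filter]
    refine Finset.sum_bij' (fun s _ => j - s) (fun i _ => j - i) ?_ ?_ ?_ ?_ ?_
    · intro s hs
      simp only [Finset.mem_filter, Finset.mem_range] at hs ⊢
      omega
    · intro s hs
      simp only [Finset.mem_filter, Finset.mem_range] at hs ⊢
      omega
    · intro s hs
      simp only [Finset.mem_filter, Finset.mem_range] at hs
      show j - (j - s) = s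
      omega
    · intro s hs
      simp only [Finset.mem_filter, Finset.mem_range] at hs
      show j - (j - s) = s
      omega
    · intro s hs
      rfl
  have hhi : ∀ j, j < k → w (k + j) = ∑ i ∈ Finset.range k, if i ≤ j then 0 else u i := by
    intro j hj
    simp only [hw, Finset.sum_apply, sh]
    have : ∀ i, (if i ≤ j then 0 else u i) = if j < i then u i else 0 := fun i => by
      split_ifs <;> first | omega | rfl
    simp only [this]
    rw [← Finset.sum_filter, ← Finset.sum_filter]
    have e2 : ∑ s ∈ Finset.range k with s ≤ k + j, u (k + j - s)
        = ∑ s ∈ Finset.range k with j < s, u (k + j - s) := by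
      symm
      refine Finset.sum_subset (fun s hs => by simp at hs ⊢; omega) (fun s hs hs' => huk _ ?_)
      simp at hs hs'
      omega
    rw [e2]
    refine Finset.sum_bij' (fun s _ => k + j - s) (fun i _ => k + j - i) ?_ ?_ ?_ ?_ ?_
    · intro s hs
      simp only [Finset.mem_filter, Finset.mem_range] at hs ⊢
      omega
    · intro s hs
      simp only [Finset.mem_filter, Finset.mem_range] at hs ⊢
      omega
    · intro s hs
      simp only [Finset.mem_filter, Finset.mem_range] at hs
      show k + j - (k + j - s) = s
      omega
    · intro s hs
      simp only [Finset.mem_filter, Finset.mem_range] at hs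
      show k + j - (k + j - s) = s
      omega
    · intro s hs
      rfl
  set wl : ℕ → ℝ := res (Finset.range k) w with hwl
  set wh : ℕ → ℝ := fun j => if j < k then w (k + j) else 0 with hwh
  have hwhFS : FS wh := ⟨k, fun j hj => by simp [hwh, hj]⟩
  have hl : S.nrm wl ≤ S.nrm w := S.lat hwFS fun j => by
    by_cases h : j < k <;> simp [hwl, res, h]
  have hh : S.nrm wh ≤ S.nrm w := by
    have : S.nrm (fun j => if k ≤ j ∧ j < k + k then w j else 0) = S.nrm wh := by
      refine S.nrm_comp hwhFS (fun i => k + i) (fun a b h => by simpa using h)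
        (fun n => ?_) (fun j hj => ?_)
      · simp [hwh]
      · rw [if_neg]
        rintro ⟨h1, h2⟩
        exact hj ⟨j - k, by omega⟩
    rw [← this]
    refine S.lat hwFS fun j => ?_
    split_ifs <;> simp
  have hsumw : wl + wh = T • indic k := by
    funext j
    by_cases h : j < k
    · simp only [hwl, hwh, res, Pi.add_apply, Finset.mem_range, h, if_true, Pi.smul_apply, indic,
        smul_eq_mul, mul_one, hlo j h, hhi j h, ← Finset.sum_add_distrib, hT]
      refine Finset.sum_congr rfl fun i _ => ?_
      split_ifs <;> simp
    · simp [hwl, hwh, res, indic, h]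
  have hfin : T * S.Lam k ≤ 2 * (k * S.nrm u) := by
    have h1 : S.nrm (T • indic k) = T * S.Lam k := by rw [S.nrm_smul, abs_of_nonneg hT0]; rfl
    rw [← h1, ← hsumw]
    have := S.nrm_triangle (S.mem_of_fs (FS.res (Finset.range k) w)) (S.mem_of_fs hwhFS)
    rw [← hwl] at this
    linarith
  have := S.Lam_nonneg k
  calc _ ≤ T * S.Lam k := by gcongr
    _ ≤ _ := hfin
    _ ≤ 2 * (k * S.nrm g) := by gcongr
    _ = _ := by ring

end SubsymmetricSpace

/-! ### Regularity and partitions -/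

theorem decay (G : ℕ → ℝ) (b : ℕ) (hb : 2 ≤ b) (hG : ∀ k, 0 ≤ G k)
    (h1 : ∀ k N, 1 ≤ k → k ≤ N → G N ≤ 2 * G k) (h2 : ∀ k, 1 ≤ k → 2 * G (b * k) ≤ G k) :
    ∃ α : ℝ, 0 < α ∧ ∀ k N : ℕ, 1 ≤ k → k ≤ N → G N ≤ 4 * ((k : ℝ) / N) ^ α * G k := by
  have hb' : (1 : ℝ) < b := by exact_mod_cast (by omega : 1 < b)
  refine ⟨Real.logb b 2, Real.logb_pos hb' (by norm_num), fun k N hk hN => ?_⟩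
  have hbα : (b : ℝ) ^ Real.logb b 2 = 2 :=
    Real.rpow_logb (by linarith) hb'.ne' (by norm_num)
  set s := Nat.log b (N / k) with hs
  have hdiv : N / k ≠ 0 := by
    have := Nat.div_pos hN (by omega)
    omega
  have hlow : b ^ s * k ≤ N := by
    have := Nat.pow_log_le_self b hdiv
    calc b ^ s * k ≤ N / k * k := Nat.mul_le_mul_right k this
      _ ≤ N := Nat.div_mul_le_self N k
  have hup : N ≤ b ^ (s + 1) * k := by
    have h3 := Nat.lt_pow_succ_log_self (b := b) (by omega) (N / k)
    exact ((Nat.div_lt_iff_lt_mul (by omega)).1 h3).le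
  have hit : ∀ s : ℕ, 2 ^ s * G (b ^ s * k) ≤ G k := by
    intro s
    induction s with
    | zero => simp
    | succ s ih =>
      have h3 := h2 (b ^ s * k) (Nat.mul_pos (by positivity) (by omega))
      rw [← mul_assoc, ← pow_succ'] at h3
      calc (2 : ℝ) ^ (s + 1) * G (b ^ (s + 1) * k) = 2 ^ s * (2 * G (b ^ (s + 1) * k)) := by ring
        _ ≤ 2 ^ s * G (b ^ s * k) := by gcongr
        _ ≤ _ := ih
  have h3 := h1 (b ^ s * k) N (Nat.mul_pos (by positivity) (by omega)) hlow
  have hk' : (0 : ℝ) < k := by exact_mod_cast hk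
  have hN' : (0 : ℝ) < N := by exact_mod_cast (hk.trans hN)
  have h4 : ((2 : ℝ) ^ (s + 1))⁻¹ ≤ ((k : ℝ) / N) ^ Real.logb b 2 := by
    have h5 : (((b : ℝ) ^ (s + 1))⁻¹) ^ Real.logb b 2 = ((2 : ℝ) ^ (s + 1))⁻¹ := by
      rw [Real.inv_rpow (by positivity), ← Real.rpow_natCast, ← Real.rpow_mul (by positivity),
        mul_comm, Real.rpow_mul (by positivity), hbα, Real.rpow_natCast]
    rw [← h5]
    have h6 : (N : ℝ) ≤ b ^ (s + 1) * k := by exact_mod_cast hup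
    refine Real.rpow_le_rpow (by positivity) ?_ (Real.logb_pos hb' (by norm_num)).le
    rw [inv_eq_one_div, div_le_div_iff₀ (by positivity) hN']
    linarith
  have h7 := hit s
  have h8 := hG k
  have h9 : G (b ^ s * k) ≤ ((2 : ℝ) ^ s)⁻¹ * G k := by
    rw [inv_mul_eq_div, le_div_iff₀ (by positivity)]
    linarith
  calc G N ≤ 2 * (((2 : ℝ) ^ s)⁻¹ * G k) := by linarith
    _ = 4 * ((2 : ℝ) ^ (s + 1))⁻¹ * G k := by rw [pow_succ, mul_inv]; ring
    _ ≤ _ := by gcongr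

theorem decay_geo (α : ℝ) (hα : 0 < α) (θ : ℝ) (h0 : 0 < θ) (h1 : θ < 1) (K : ℝ) (hK : 1 ≤ K) :
    ∃ E η : ℝ, 0 ≤ E ∧ 0 < η ∧ η < 1 ∧ ∀ (i : ℕ) (k N : ℕ), 1 ≤ k → k ≤ N →
      (k : ℝ) ≤ K * θ ^ i * N → ((k : ℝ) / N) ^ α ≤ E * η ^ i := by
  refine ⟨K ^ α, θ ^ α, by positivity, by positivity, Real.rpow_lt_one h0.le h1 hα,
    fun i k N hk hN h => ?_⟩
  have hN' : (0 : ℝ) < N := by exact_mod_cast (hk.trans hN)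
  calc ((k : ℝ) / N) ^ α ≤ (K * θ ^ i) ^ α := by
        refine Real.rpow_le_rpow (by positivity) ?_ hα.le
        rwa [div_le_iff₀ hN']
    _ = _ := by
      rw [Real.mul_rpow (by positivity) (by positivity), ← Real.rpow_natCast, ← Real.rpow_natCast,
        ← Real.rpow_mul h0.le, ← Real.rpow_mul h0.le, mul_comm α]

theorem regular (S : SubsymmetricSpace) (hL : LRP S.Lam) (hU : URP S.Lam)
    (θ : ℝ) (h0 : 0 < θ) (h1 : θ < 1) (K : ℝ) (hK : 1 ≤ K) :
    ∃ E η : ℝ, 0 ≤ E ∧ 0 < η ∧ η < 1 ∧ ∀ (i : ℕ) (k N : ℕ), 1 ≤ k → k ≤ N →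
      (k : ℝ) ≤ K * θ ^ i * N →
      S.Lam N / N ≤ E * η ^ i * (S.Lam k / k) ∧ S.Lam k ≤ E * η ^ i * S.Lam N ∧
      (k : ℝ) / N ≤ E * η ^ i := by
  obtain ⟨b, hb0, hb⟩ := hU
  obtain ⟨c, hc0, hc⟩ := hL
  have hΛ1 := S.Lam_pos (m := 1) le_rfl
  have hb2 : 2 ≤ b := by
    by_contra h
    have : b = 1 := by omega
    subst this
    have := hb 1 le_rfl
    simp at this
    linarith
  have hc2 : 2 ≤ c := by
    by_contra h
    have : c = 1 := by omega
    subst this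
    have := hc 1 le_rfl
    simp at this
    linarith
  obtain ⟨α, hα, hd1⟩ := decay (fun k => S.Lam k / k) b hb2
    (fun k => div_nonneg (S.Lam_nonneg k) (by positivity)) (fun k N hk hN => S.rho_le hk hN)
    (fun k hk => by
      have h2 := hb k hk
      have hk' : (0 : ℝ) < k := by exact_mod_cast hk
      have hb' : (0 : ℝ) < b := by exact_mod_cast hb0
      push_cast
      rw [← mul_div_assoc, div_le_div_iff₀ (by positivity) hk']
      nlinarith)
  obtain ⟨β, hβ, hd2⟩ := decay (fun k => (S.Lam k)⁻¹) c hc2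
    (fun k => inv_nonneg.2 (S.Lam_nonneg k)) (fun k N hk hN => by
      have h2 := S.Lam_pos hk
      have h3 := S.Lam_mono hN
      have : (S.Lam N)⁻¹ ≤ (S.Lam k)⁻¹ := by gcongr
      have := inv_pos.2 h2
      linarith)
    (fun k hk => by
      have h2 := S.Lam_pos hk
      have h3 := hc k hk
      rw [← div_eq_mul_inv, div_le_iff₀ (by linarith), inv_mul_eq_div, le_div_iff₀ h2]
      exact h3)
  obtain ⟨E1, η1, hE1, hη1, hη1', g1⟩ := decay_geo α hα θ h0 h1 K hK
  obtain ⟨E2, η2, hE2, hη2, hη2', g2⟩ := decay_geo β hβ θ h0 h1 K hK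
  set E := max (4 * E1) (max (4 * E2) K) with hE
  set η := max η1 (max η2 θ) with hη
  have e1 : 4 * E1 ≤ E := le_max_left _ _
  have e2 : 4 * E2 ≤ E := (le_max_left _ _).trans (le_max_right _ _)
  have e3 : K ≤ E := (le_max_right _ _).trans (le_max_right _ _)
  have n1 : η1 ≤ η := le_max_left _ _
  have n2 : η2 ≤ η := (le_max_left _ _).trans (le_max_right _ _)
  have n3 : θ ≤ η := (le_max_right _ _).trans (le_max_right _ _)
  have hη0 : 0 < η := h0.trans_le n3
  have hE0 : 0 ≤ E := by linarith
  refine ⟨E, η, hE0, hη0, max_lt hη1' (max_lt hη2' h1), fun i k N hk hN h => ⟨?_, ?_, ?_⟩⟩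
  · have h2 := hd1 k N hk hN
    have h3 := g1 i k N hk hN h
    have h4 : 0 ≤ S.Lam k / k := div_nonneg (S.Lam_nonneg k) (by positivity)
    refine h2.trans (mul_le_mul_of_nonneg_right ?_ h4)
    calc _ ≤ 4 * (E1 * η1 ^ i) := by gcongr
      _ = 4 * E1 * η1 ^ i := by ring
      _ ≤ _ := by gcongr
  · have h2 := hd2 k N hk hN
    have h3 := g2 i k N hk hN h
    have h4 := S.Lam_pos hk
    have h5 := S.Lam_pos (hk.trans hN)
    rw [← div_eq_mul_inv, inv_eq_one_div, div_le_div_iff₀ h5 h4, one_mul] at h2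
    refine h2.trans (mul_le_mul_of_nonneg_right ?_ h5.le)
    calc _ ≤ 4 * (E2 * η2 ^ i) := by gcongr
      _ = 4 * E2 * η2 ^ i := by ring
      _ ≤ _ := by gcongr
  · have hN' : (0 : ℝ) < N := by exact_mod_cast (hk.trans hN)
    rw [div_le_iff₀ hN']
    refine h.trans ?_
    gcongr

namespace OrderedPartition
variable (σ : OrderedPartition)

theorem N_pos (n : ℕ) : 1 ≤ σ.N n := Finset.card_pos.2 (σ.nonempty n)

theorem lt_of_lt {n m : ℕ} (h : n < m) : ∀ i ∈ σ.part n, ∀ j ∈ σ.part m, i < j := by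
  obtain ⟨d, rfl⟩ := Nat.exists_eq_add_of_lt h
  clear h
  induction d with
  | zero => exact σ.ordered n
  | succ d ih =>
    intro i hi j hj
    obtain ⟨l, hl⟩ := σ.nonempty (n + d + 1)
    exact (ih i hi l hl).trans (σ.ordered _ l hl j hj)

theorem uniq {n m j : ℕ} (hn : j ∈ σ.part n) (hm : j ∈ σ.part m) : n = m := by
  rcases lt_trichotomy n m with h | h | h
  · exact absurd (σ.lt_of_lt h j hn j hm) (lt_irrefl _)
  · exact h
  · exact absurd (σ.lt_of_lt h j hm j hn) (lt_irrefl _)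

theorem biUnion_part (r : ℕ) : (Finset.range r).biUnion σ.part = Finset.range (σ.M r) := by
  set U := (Finset.range r).biUnion σ.part with hU
  have hcard : U.card = σ.M r := by
    rw [hU, Finset.card_biUnion]
    · rfl
    · intro i _ j _ hij
      rw [Function.onFun, Finset.disjoint_left]
      exact fun a ha hb => hij (σ.uniq ha hb)
  have hlow : ∀ k ∈ U, ∀ k' < k, k' ∈ U := by
    intro k hk k' hk'
    simp only [hU, Finset.mem_biUnion, Finset.mem_range] at hk ⊢
    obtain ⟨n, hn, hkn⟩ := hk
    obtain ⟨m, hm⟩ := σ.covers k'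
    refine ⟨m, ?_, hm⟩
    by_contra h
    have := σ.lt_of_lt (show n < m by omega) k hkn k' hm
    omega
  refine Finset.eq_of_subset_of_card_le (fun k hk => ?_) (by rw [Finset.card_range, hcard])
  rw [Finset.mem_range, ← hcard]
  have hsub : Finset.range (k + 1) ⊆ U := fun i hi => by
    rw [Finset.mem_range] at hi
    rcases Nat.lt_or_ge i k with h | h
    · exact hlow k hk i h
    · have : i = k := by omega
      rwa [this]
  have := Finset.card_le_card hsub
  rw [Finset.card_range] at this
  omega

theorem M_succ (n : ℕ) : σ.M (n + 1) = σ.M n + σ.N n := Finset.sum_range_succ _ _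

theorem lt_M_iff {n j r : ℕ} (hj : j ∈ σ.part n) : j < σ.M r ↔ n < r := by
  rw [← Finset.mem_range, ← biUnion_part]
  simp only [Finset.mem_biUnion, Finset.mem_range]
  constructor
  · rintro ⟨m, hm, hjm⟩
    rwa [σ.uniq hj hjm]
  · exact fun h => ⟨n, h, hj⟩

theorem Pavg_apply {n j : ℕ} (hj : j ∈ σ.part n) (f : ℕ → ℝ) :
    σ.Pavg f j = (∑ i ∈ σ.part n, f i) / (σ.N n : ℝ) := by
  have h : ∃ n, j ∈ σ.part n := ⟨n, hj⟩
  have hk : h.choose = n := σ.uniq h.choose_spec hj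
  unfold Pavg
  rw [dif_pos h, hk]
  rfl

theorem le_M (r : ℕ) : r ≤ σ.M r := by
  induction r with
  | zero => simp
  | succ r ih => rw [M_succ]; have := σ.N_pos r; omega

/-- For a finitely supported sequence, all blocks far away vanish. -/
theorem fs_block {f : ℕ → ℝ} (hf : FS f) : ∃ R, ∀ n, R ≤ n → ∀ j ∈ σ.part n, f j = 0 := by
  obtain ⟨m, hm⟩ := hf
  refine ⟨m, fun n hn j hj => hm j ?_⟩
  by_contra h
  have := (σ.lt_M_iff (r := m) hj).1 (by have := σ.le_M m; omega)
  omega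

theorem fs_Pavg {f : ℕ → ℝ} (hf : FS f) : FS (σ.Pavg f) := by
  obtain ⟨R, hR⟩ := σ.fs_block hf
  refine ⟨σ.M R, fun j hj => ?_⟩
  obtain ⟨n, hn⟩ := σ.covers j
  have : R ≤ n := by
    by_contra h
    have := (σ.lt_M_iff (r := R) hn).2 (by omega)
    omega
  rw [σ.Pavg_apply hn, Finset.sum_eq_zero (hR n this), zero_div]

theorem fs_Qavg {f : ℕ → ℝ} (hf : FS f) : FS (σ.Qavg f) := hf.sub (σ.fs_Pavg hf)

end OrderedPartition

/-! ### The main estimate -/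

theorem coord_sum {X : Type*} [AddCommGroup X] [Module ℝ X] (B : QuasiBanach X) (b : QBasis B)
    (n : ℕ) {ι : Type*} (J : Finset ι) (F : ι → X) :
    b.coord n (∑ i ∈ J, F i) = ∑ i ∈ J, b.coord n (F i) := by
  induction J using Finset.induction_on with
  | empty => simpa using b.coord_smul n 0 0 trivial
  | insert a s ha ih =>
    rw [Finset.sum_insert ha, Finset.sum_insert ha, b.coord_add _ _ _ trivial trivial, ih]

section
variable {X : Type*} [AddCommGroup X] [Module ℝ X] (B : QuasiBanach X) (b : QBasis B)
  (S : SubsymmetricSpace) (σ : OrderedPartition)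

theorem Hmap_eq {f : ℕ → ℝ} {R : ℕ} (hR : ∀ n, R ≤ n → vstar S σ n f = 0) :
    Hmap B b S σ f = ∑ n ∈ Finset.range R, vstar S σ n f • b.vec n := by
  unfold Hmap
  refine finsum_eq_sum_of_support_subset _ fun n hn => ?_
  simp only [Finset.coe_range, Set.mem_Iio]
  by_contra h
  exact hn (by simp [hR n (by omega)])

theorem vstar_block {f : ℕ → ℝ} (hf : FS f) : ∃ R, ∀ n, R ≤ n → vstar S σ n f = 0 := by
  obtain ⟨R, hR⟩ := σ.fs_block hf
  refine ⟨R, fun n hn => ?_⟩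
  unfold vstar
  rw [Finset.sum_eq_zero (hR n hn), mul_zero]

theorem coord_Hmap {f : ℕ → ℝ} (hf : FS f) (n : ℕ) :
    b.coord n (Hmap B b S σ f) = vstar S σ n f := by
  obtain ⟨R, hR⟩ := vstar_block S σ hf
  rw [Hmap_eq B b S σ (R := max R (n + 1)) (fun m hm => hR m (le_of_max_le_left hm)), coord_sum]
  have h : ∀ i, b.coord n (vstar S σ i f • b.vec i) = if n = i then vstar S σ i f else 0 :=
    fun i => by
      rw [b.coord_smul _ _ _ trivial, b.biorth]
      split_ifs <;> simp
  simp only [h]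
  rw [Finset.sum_ite_eq, if_pos (by simp)]

theorem Pavg_vstar {n j : ℕ} (hj : j ∈ σ.part n) (f : ℕ → ℝ) :
    σ.Pavg f j = vstar S σ n f / S.Lam (σ.N n) := by
  rw [σ.Pavg_apply hj, vstar]
  have := S.Lam_pos (σ.N_pos n)
  field_simp

theorem vstar_res (A : Finset ℕ) (f : ℕ → ℝ) (n : ℕ) :
    vstar S σ n (res A f) = S.Lam (σ.N n) / σ.N n * ∑ j ∈ σ.part n ∩ A, f j := by
  unfold vstar res
  rw [Finset.sum_ite_mem]

theorem block_nrm (D : ℕ → Finset ℕ) (hD : ∀ n, D n ⊆ σ.part n) (F : ℕ → ℝ) (c : ℕ → ℝ)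
    (hF : ∀ n, ∀ j ∈ σ.part n, F j = if j ∈ D n then c n else 0) (R : ℕ)
    (hR : ∀ n, R ≤ n → c n = 0) :
    S.nrm F ≤ ∑ n ∈ Finset.range R, |c n| * S.Lam (D n).card := by
  have h : F = ∑ n ∈ Finset.range R, c n • res (D n) 1 := by
    funext j
    obtain ⟨m, hm⟩ := σ.covers j
    rw [hF m j hm, Finset.sum_apply]
    have h1 : ∀ n, (c n • res (D n) 1) j = if n = m then (if j ∈ D m then c m else 0) else 0 := by
      intro n
      by_cases h : n = m
      · subst h
        simp [res]
      · have : j ∉ D n := fun hj => h (σ.uniq (hD n hj) hm)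
        simp [res, this, h]
    simp only [h1]
    rw [Finset.sum_ite_eq']
    by_cases h3 : m ∈ Finset.range R
    · rw [if_pos h3]
    · rw [if_neg h3, hR m (by simpa using h3), ite_self]
  rw [h]
  refine (S.nrm_sum _ _ fun i _ => S.mem_of_fs ((FS.res _ _).smul _)).trans (le_of_eq ?_)
  refine Finset.sum_congr rfl fun i _ => ?_
  rw [S.nrm_smul, S.nrm_ind]

theorem YNorm_nonneg (f : ℕ → ℝ) : 0 ≤ YNorm B b S σ f :=
  add_nonneg (S.nrm_nonneg _) (B.q_nonneg _)

theorem main_est (hs : b.toBioSystem.SemiNormalized) (hL : LRP S.Lam) (hU : URP S.Lam)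
    (θ : ℝ) (hθ0 : 0 < θ) (hθ1 : θ < 1) (K : ℝ) (hK : 1 ≤ K) :
    ∃ D, 0 ≤ D ∧ ∀ f, FS f → ∀ (A : Finset ℕ) (r : ℕ),
      (∀ n, n < r → σ.part n ∩ A = ∅) →
      (∀ i, ((σ.part (r + i) ∩ A).card : ℝ) ≤ K * θ ^ i * σ.N (r + i)) →
      YNorm B b S σ (res A f) ≤ D * YNorm B b S σ f := by
  obtain ⟨C1, hC1, hcoord⟩ := basis_coord B b hs
  obtain ⟨c0, C2, hc0, hvec⟩ := hs
  have hC2 : 0 ≤ C2 := le_trans (B.q_nonneg _) (hvec 0).2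
  obtain ⟨E, η, hE, hη0, hη1, hreg⟩ := regular S hL hU θ hθ0 hθ1 K hK
  obtain ⟨K1, hK1, hgeo1⟩ := geo_sum_shift B.q B.kappa B.one_le_kappa B.q_zero B.q_triangle η
    hη0 hη1
  obtain ⟨K2, hK2, hgeo2⟩ := geo_sum_shift (fun x : ℝ => |x|) 1 le_rfl (by simp)
    (fun x y => by simpa using abs_add_le x y) η hη0 hη1
  set E' := 2 * E + E * C1 with hE'
  have hE'0 : 0 ≤ E' := by positivity
  refine ⟨K1 * (E' * C2) + (1 + K2 * (E * C1) + K2 * E'), by positivity,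
    fun f hf A r hlow hcard => ?_⟩
  set Y := YNorm B b S σ f with hY
  have hY0 : 0 ≤ Y := YNorm_nonneg B b S σ f
  set g := σ.Qavg f with hg
  have hgFS : FS g := σ.fs_Qavg hf
  have hgY : S.nrm g ≤ Y := by
    have := B.q_nonneg (Hmap B b S σ f)
    rw [hY, YNorm]; linarith
  have hHY : B.q (Hmap B b S σ f) ≤ Y := by
    have := S.nrm_nonneg g
    rw [hY, YNorm]; linarith
  have hcn : ∀ n, |vstar S σ n f| ≤ C1 * Y := fun n => by
    rw [← coord_Hmap B b S σ hf]
    exact (hcoord n _).trans (by gcongr)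
  -- estimate of v_n^* (S_A f)
  have hvz : ∀ n, n < r → vstar S σ n (res A f) = 0 := fun n hn => by
    rw [vstar_res, hlow n hn]; simp
  have hv : ∀ i, |vstar S σ (r + i) (res A f)| ≤ E' * Y * η ^ i := by
    intro i
    rw [vstar_res]
    set n := r + i with hn
    set D := σ.part n ∩ A with hD
    rcases Nat.eq_zero_or_pos D.card with hk | hk
    · rw [Finset.card_eq_zero.1 hk]
      simp only [Finset.sum_empty, mul_zero, abs_zero]
      positivity
    have hkN : D.card ≤ σ.N n := Finset.card_le_card Finset.inter_subset_left
    obtain ⟨h1, -, h3⟩ := hreg i D.card (σ.N n) hk hkN (hcard i)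
    have hΛN := S.Lam_pos (σ.N_pos n)
    have hΛk := S.Lam_pos hk
    have hk' : (0 : ℝ) < D.card := by exact_mod_cast hk
    have hN' : (0 : ℝ) < σ.N n := by exact_mod_cast σ.N_pos n
    have hsplit : ∑ j ∈ D, f j = ∑ j ∈ D, g j + D.card * (vstar S σ n f / S.Lam (σ.N n)) := by
      rw [← nsmul_eq_mul, ← Finset.sum_const, ← Finset.sum_add_distrib]
      refine Finset.sum_congr rfl fun j hj => ?_
      rw [← Pavg_vstar S σ (Finset.mem_of_mem_inter_left hj) f]
      simp [hg, OrderedPartition.Qavg]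
    rw [hsplit, mul_add]
    have hh := S.holder hgFS D
    have t1 : |S.Lam (σ.N n) / σ.N n * ∑ j ∈ D, g j| ≤ 2 * E * Y * η ^ i := by
      rw [abs_mul, abs_of_pos (by positivity)]
      calc _ ≤ E * η ^ i * (S.Lam D.card / D.card) * |∑ j ∈ D, g j| := by gcongr
        _ = E * η ^ i / D.card * (|∑ j ∈ D, g j| * S.Lam D.card) := by ring
        _ ≤ E * η ^ i / D.card * (2 * D.card * S.nrm g) := by gcongr
        _ = E * η ^ i * 2 * S.nrm g := by field_simp
        _ ≤ E * η ^ i * 2 * Y := by gcongr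
        _ = _ := by ring
    have t2 : |S.Lam (σ.N n) / σ.N n * (D.card * (vstar S σ n f / S.Lam (σ.N n)))| ≤
        E * C1 * Y * η ^ i := by
      have : S.Lam (σ.N n) / σ.N n * (D.card * (vstar S σ n f / S.Lam (σ.N n))) =
          (D.card : ℝ) / σ.N n * vstar S σ n f := by field_simp
      rw [this, abs_mul, abs_of_pos (by positivity)]
      calc _ ≤ E * η ^ i * (C1 * Y) := by
            have := hcn n
            gcongr
        _ = _ := by ring
    calc _ ≤ _ := abs_add_le _ _
      _ ≤ 2 * E * Y * η ^ i + E * C1 * Y * η ^ i := add_le_add t1 t2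
      _ = _ := by rw [hE']; ring
  have hAFS : FS (res A f) := FS.res A f
  -- the part in X
  have hX : B.q (Hmap B b S σ (res A f)) ≤ K1 * (E' * C2 * Y) := by
    obtain ⟨R, hR⟩ := vstar_block S σ hAFS
    rw [Hmap_eq B b S σ hR]
    refine hgeo1 _ (by positivity) r _ (fun i hi => by simp [hvz i hi]) (fun i => ?_) R
    rw [B.q_smul]
    calc _ ≤ E' * Y * η ^ i * C2 := by
          have h1 := hv i
          have h2 := (hvec (r + i)).2
          have h3 := B.q_nonneg (b.vec (r + i))
          gcongr
      _ = _ := by ring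
  -- the part P S_A f
  have hP : S.nrm (σ.Pavg (res A f)) ≤ K2 * (E' * Y) := by
    obtain ⟨R, hR⟩ := vstar_block S σ hAFS
    have h1 := block_nrm S σ σ.part (fun n => subset_rfl) (σ.Pavg (res A f))
      (fun n => vstar S σ n (res A f) / S.Lam (σ.N n))
      (fun n j hj => by rw [if_pos hj, Pavg_vstar S σ hj]) R (fun n hn => by simp [hR n hn])
    have h2 : ∀ n, |vstar S σ n (res A f) / S.Lam (σ.N n)| * S.Lam (σ.part n).card =
        |vstar S σ n (res A f)| := fun n => by
      have hΛN := S.Lam_pos (σ.N_pos n)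
      rw [abs_div, abs_of_pos hΛN]
      exact div_mul_cancel₀ _ hΛN.ne'
    simp only [h2] at h1
    refine h1.trans ((le_abs_self _).trans ?_)
    exact hgeo2 _ (by positivity) r (fun n => |vstar S σ n (res A f)|)
      (fun i hi => by simp [hvz i hi]) (fun i => by simpa using hv i) R
  -- the part S_A P f
  have hAP : S.nrm (res A (σ.Pavg f)) ≤ K2 * (E * C1 * Y) := by
    obtain ⟨R, hR⟩ := vstar_block S σ hf
    have h1 := block_nrm S σ (fun n => σ.part n ∩ A) (fun n => Finset.inter_subset_left)
      (res A (σ.Pavg f)) (fun n => vstar S σ n f / S.Lam (σ.N n))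
      (fun n j hj => by simp [res, hj, Pavg_vstar S σ hj]) R (fun n hn => by simp [hR n hn])
    have hΛ0 : S.Lam 0 = 0 := by
      have := S.Lam_mul 0 0
      have := S.Lam_nonneg 0
      simp at *
      linarith
    refine h1.trans ((le_abs_self _).trans ?_)
    refine hgeo2 _ (by positivity) r 
      (fun n => |vstar S σ n f / S.Lam (σ.N n)| * S.Lam (σ.part n ∩ A).card)
      (fun i hi => by simp [hlow i hi, hΛ0]) (fun i => ?_) R
    set n := r + i with hn
    set D := σ.part n ∩ A with hD
    have hΛN := S.Lam_pos (σ.N_pos n)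
    rcases Nat.eq_zero_or_pos D.card with hk | hk
    · simp only [hk, hΛ0, mul_zero, abs_zero]
      positivity
    have hkN : D.card ≤ σ.N n := Finset.card_le_card Finset.inter_subset_left
    obtain ⟨-, h2, -⟩ := hreg i D.card (σ.N n) hk hkN (hcard i)
    rw [abs_mul, abs_abs, abs_div, abs_of_pos hΛN, abs_of_pos (S.Lam_pos hk)]
    calc _ ≤ |vstar S σ n f| / S.Lam (σ.N n) * (E * η ^ i * S.Lam (σ.N n)) := by gcongr
      _ = E * η ^ i * |vstar S σ n f| := by field_simp
      _ ≤ E * η ^ i * (C1 * Y) := by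
        have := hcn n
        gcongr
      _ = _ := by ring
  have hAg : S.nrm (res A g) ≤ Y := by
    refine le_trans (S.lat hgFS fun j => ?_) hgY
    by_cases h : j ∈ A <;> simp [res, h]
  have hQ : S.nrm (σ.Qavg (res A f)) ≤ Y + K2 * (E * C1 * Y) + K2 * (E' * Y) := by
    have e : σ.Qavg (res A f) = (res A g + res A (σ.Pavg f)) + (-1 : ℝ) • σ.Pavg (res A f) := by
      funext j
      by_cases h : j ∈ A <;> simp [OrderedPartition.Qavg, res, h, hg] <;> ring
    rw [e]
    have h1 := S.nrm_triangle (S.mem_of_fs (FS.res A g)) (S.mem_of_fs (FS.res A (σ.Pavg f)))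
    have h2 := S.nrm_triangle (S.mem_of_fs ((FS.res A g).add (FS.res A (σ.Pavg f))))
      (S.mem_of_fs ((σ.fs_Pavg hAFS).smul (-1)))
    rw [S.nrm_smul] at h2
    simp only [abs_neg, abs_one, one_mul] at h2
    linarith
  calc YNorm B b S σ (res A f) = S.nrm (σ.Qavg (res A f)) + B.q (Hmap B b S σ (res A f)) := rfl
    _ ≤ _ := add_le_add hQ hX
    _ = _ := by ring

/-- Initial segments made of complete blocks. -/
theorem block_est : ∃ D, 0 ≤ D ∧ ∀ f, FS f → ∀ r,
      YNorm B b S σ (res (Finset.range (σ.M r)) f) ≤ D * YNorm B b S σ f := by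
  obtain ⟨C, hC0, hC⟩ := basis_partial B b
  refine ⟨1 + C, by positivity, fun f hf r => ?_⟩
  set A := Finset.range (σ.M r) with hA
  have hAFS : FS (res A f) := FS.res A f
  have hmem : ∀ n, ∀ j ∈ σ.part n, (j ∈ A ↔ n < r) := fun n j hj => by
    rw [hA, Finset.mem_range, σ.lt_M_iff hj]
  have hsum : ∀ n, ∑ j ∈ σ.part n, res A f j = if n < r then ∑ j ∈ σ.part n, f j else 0 := by
    intro n
    split_ifs with h
    · exact Finset.sum_congr rfl fun j hj => by simp [res, hmem n j hj, h]
    · exact Finset.sum_eq_zero fun j hj => by simp [res, hmem n j hj, h]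
  have hvs : ∀ n, vstar S σ n (res A f) = if n < r then vstar S σ n f else 0 := fun n => by
    unfold vstar
    rw [hsum]
    split_ifs <;> simp
  have hQ : σ.Qavg (res A f) = res A (σ.Qavg f) := by
    funext j
    obtain ⟨n, hn⟩ := σ.covers j
    simp only [OrderedPartition.Qavg, Pi.sub_apply]
    rw [σ.Pavg_apply hn, hsum n]
    simp only [res, hmem n j hn, Pi.sub_apply]
    rw [σ.Pavg_apply hn]
    split_ifs <;> simp
  have h1 : S.nrm (σ.Qavg (res A f)) ≤ S.nrm (σ.Qavg f) := by
    rw [hQ]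
    refine S.lat (σ.fs_Qavg hf) fun j => ?_
    by_cases h : j ∈ A <;> simp [res, h]
  have h2 : B.q (Hmap B b S σ (res A f)) ≤ C * B.q (Hmap B b S σ f) := by
    rw [Hmap_eq B b S σ (R := r) (fun n hn => by rw [hvs, if_neg (by omega)])]
    refine le_trans (le_of_eq ?_) (hC r _)
    congr 1
    refine Finset.sum_congr rfl fun n hn => ?_
    rw [hvs, if_pos (by simpa using hn), coord_Hmap B b S σ hf]
  have h3 := S.nrm_nonneg (σ.Qavg f)
  have h4 := B.q_nonneg (Hmap B b S σ f)
  unfold YNorm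
  nlinarith

/-- Coordinates are bounded. -/
theorem coordY (hs : b.toBioSystem.SemiNormalized) (n : ℕ) :
    ∃ C, 0 ≤ C ∧ ∀ f, FS f → |f n| ≤ C * YNorm B b S σ f := by
  obtain ⟨C1, hC1, hcoord⟩ := basis_coord B b hs
  obtain ⟨m, hm⟩ := σ.covers n
  have h1 := S.Lam_pos (m := 1) le_rfl
  have h2 := S.Lam_pos (σ.N_pos m)
  refine ⟨(S.Lam 1)⁻¹ + C1 / S.Lam (σ.N m), by positivity, fun f hf => ?_⟩
  have h3 : |σ.Qavg f n| * S.Lam 1 ≤ S.nrm (σ.Qavg f) := by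
    have := S.nrm_ind {n}
    rw [Finset.card_singleton] at this
    rw [← this, ← S.nrm_smul]
    refine S.lat (σ.fs_Qavg hf) fun j => ?_
    by_cases h : j = n
    · subst h; simp [res]
    · simp [res, h]
  have h4 := hcoord m (Hmap B b S σ f)
  rw [coord_Hmap B b S σ hf] at h4
  have h5 : f n = σ.Qavg f n + vstar S σ m f / S.Lam (σ.N m) := by
    rw [← Pavg_vstar S σ hm]; simp [OrderedPartition.Qavg]
  have h6 := S.nrm_nonneg (σ.Qavg f)
  have h7 := B.q_nonneg (Hmap B b S σ f)
  rw [h5]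
  refine (abs_add_le _ _).trans ?_
  rw [abs_div, abs_of_pos h2]
  rw [← le_div_iff₀ h1] at h3
  calc _ ≤ S.nrm (σ.Qavg f) / S.Lam 1 + C1 * B.q (Hmap B b S σ f) / S.Lam (σ.N m) := by gcongr
    _ = (S.Lam 1)⁻¹ * S.nrm (σ.Qavg f) + C1 / S.Lam (σ.N m) * B.q (Hmap B b S σ f) := by ring
    _ ≤ (S.Lam 1)⁻¹ * YNorm B b S σ f + C1 / S.Lam (σ.N m) * YNorm B b S σ f := by
      unfold YNorm
      gcongr <;> linarith
    _ = _ := by ring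

end

/-! ### Extension to the completion -/

theorem le_of_forall_small {x y M : ℝ} (h : ∀ ε : ℝ, 0 < ε → x ≤ y + M * ε) : x ≤ y := by
  refine le_of_forall_pos_le_add fun ε hε => ?_
  have h1 := h (ε / (|M| + 1)) (by positivity)
  have h2 : M * (ε / (|M| + 1)) ≤ ε := by
    rw [mul_div_assoc', div_le_iff₀ (by positivity)]
    nlinarith [le_abs_self M, abs_nonneg M]
  linarith

section
variable {Y : Type*} [AddCommGroup Y] [Module ℝ Y] (BY : QuasiBanach Y) (j : (ℕ →₀ ℝ) →ₗ[ℝ] Y)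

theorem ext_point
    (hdense : ∀ y : Y, ∀ ε : ℝ, 0 < ε → ∃ f : ℕ →₀ ℝ, BY.q (y - j f) < ε)
    (l : (ℕ →₀ ℝ) →ₗ[ℝ] ℝ) (C : ℝ) (hC : 0 ≤ C) (hl : ∀ f, |l f| ≤ C * BY.q (j f))
    (y : Y) : ∃ a : ℝ, ∀ f, |a - l f| ≤ C * BY.kappa * BY.q (y - j f) := by
  have hκ := BY.one_le_kappa
  choose u hu using fun k : ℕ => hdense y (1 / ((k : ℝ) + 1)) (by positivity)
  have key : ∀ f g, |l f - l g| ≤ C * BY.kappa * (BY.q (y - j f) + BY.q (y - j g)) := by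
    intro f g
    rw [← map_sub]
    refine (hl _).trans ?_
    have h1 := BY.q_triangle (j f - y) (y - j g)
    rw [sub_add_sub_cancel, BY.q_sub_comm (j f) y] at h1
    rw [map_sub, mul_assoc]
    gcongr
  have ht0 : Filter.Tendsto (fun k : ℕ => 1 / ((k : ℝ) + 1)) Filter.atTop (nhds 0) :=
    tendsto_one_div_add_atTop_nhds_zero_nat
  have hcau : CauchySeq fun k => l (u k) := by
    refine cauchySeq_of_le_tendsto_0 (fun k : ℕ => C * BY.kappa * (2 * (1 / ((k : ℝ) + 1))))
      (fun n m N hn hm => ?_) ?_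
    · rw [Real.dist_eq]
      refine (key _ _).trans ?_
      have h1 : BY.q (y - j (u n)) ≤ 1 / ((N : ℝ) + 1) := (hu n).le.trans (by gcongr)
      have h2 : BY.q (y - j (u m)) ≤ 1 / ((N : ℝ) + 1) := (hu m).le.trans (by gcongr)
      gcongr
      linarith
    · simpa using (ht0.const_mul 2).const_mul (C * BY.kappa)
  obtain ⟨a, ha⟩ := cauchySeq_tendsto_of_complete hcau
  refine ⟨a, fun f => ?_⟩
  have h1 : Filter.Tendsto (fun k => |l (u k) - l f|) Filter.atTop (nhds |a - l f|) :=
    (ha.sub_const _).abs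
  have h2 : Filter.Tendsto (fun k : ℕ => C * BY.kappa * (1 / ((k : ℝ) + 1) + BY.q (y - j f)))
      Filter.atTop (nhds (C * BY.kappa * (0 + BY.q (y - j f)))) :=
    (ht0.add_const _).const_mul _
  rw [zero_add] at h2
  refine le_of_tendsto_of_tendsto' h1 h2 fun k => (key _ _).trans ?_
  have := (hu k).le
  gcongr

theorem ext_fun
    (hdense : ∀ y : Y, ∀ ε : ℝ, 0 < ε → ∃ f : ℕ →₀ ℝ, BY.q (y - j f) < ε)
    (l : (ℕ →₀ ℝ) →ₗ[ℝ] ℝ) (C : ℝ) (hC : 0 ≤ C) (hl : ∀ f, |l f| ≤ C * BY.q (j f)) :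
    ∃ L : Y → ℝ, (∀ y z, L (y + z) = L y + L z) ∧ (∀ (a : ℝ) y, L (a • y) = a * L y) ∧
      (∀ y, |L y| ≤ C * BY.kappa * BY.q y) ∧ ∀ f, L (j f) = l f := by
  have hκ := BY.one_le_kappa
  choose L hL using ext_point BY j hdense l C hC hl
  set M := C * BY.kappa with hM
  have hM0 : 0 ≤ M := by positivity
  refine ⟨L, fun y z => ?_, fun a y => ?_, fun y => ?_, fun f => ?_⟩
  · have : |L (y + z) - (L y + L z)| ≤ 0 := by
      refine le_of_forall_small (M := M * (BY.kappa * 2) + M + M) fun ε hε => ?_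
      obtain ⟨f, hf⟩ := hdense y ε hε
      obtain ⟨g, hg⟩ := hdense z ε hε
      have h1 : |L y - l f| ≤ M * ε := (hL y f).trans (by gcongr)
      have h2 : |L z - l g| ≤ M * ε := (hL z g).trans (by gcongr)
      have h3 : |L (y + z) - l (f + g)| ≤ M * (BY.kappa * (ε + ε)) := by
        refine (hL _ _).trans ?_
        have := BY.q_triangle (y - j f) (z - j g)
        rw [show y - j f + (z - j g) = y + z - j (f + g) by rw [map_add]; abel] at this
        gcongr
        exact this.trans (by gcongr)
      rw [map_add] at h3
      rw [abs_le] at *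
      constructor <;> nlinarith
    have := abs_nonpos_iff.1 this
    linarith
  · have : |L (a • y) - a * L y| ≤ 0 := by
      refine le_of_forall_small (M := M * |a| + |a| * M) fun ε hε => ?_
      obtain ⟨f, hf⟩ := hdense y ε hε
      have h1 : |a * (L y - l f)| ≤ |a| * (M * ε) := by
        rw [abs_mul]
        have := (hL y f).trans (show _ ≤ M * ε by gcongr)
        gcongr
      have h2 : |L (a • y) - l (a • f)| ≤ M * (|a| * ε) := by
        refine (hL _ _).trans ?_
        rw [map_smul, ← smul_sub, BY.q_smul]
        gcongr
      rw [map_smul, smul_eq_mul] at h2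
      rw [abs_le] at *
      constructor <;> nlinarith
    have := abs_nonpos_iff.1 this
    linarith
  · simpa using hL y 0
  · have := hL (j f) f
    rw [sub_self, BY.q_zero, mul_zero] at this
    have := abs_nonpos_iff.1 this
    linarith

/-- Finitely supported restriction. -/
def resF (A : Finset ℕ) (f : ℕ →₀ ℝ) : ℕ →₀ ℝ := ∑ n ∈ A, Finsupp.single n (f n)

theorem resF_coe (A : Finset ℕ) (f : ℕ →₀ ℝ) : ⇑(resF A f) = res A ⇑f := by
  funext i
  simp only [resF, Finsupp.finsetSum_apply, res, Finsupp.single_apply]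
  rw [Finset.sum_ite_eq']

theorem FS.coe (f : ℕ →₀ ℝ) : FS ⇑f :=
  (FS.res f.support f).mono fun i hi => by
    simpa [AGpaper.res] using hi

theorem j_resF (A : Finset ℕ) (f : ℕ →₀ ℝ) :
    j (resF A f) = ∑ n ∈ A, f n • j (Finsupp.single n 1) := by
  rw [resF, map_sum]
  refine Finset.sum_congr rfl fun n _ => ?_
  rw [← map_smul, Finsupp.smul_single, smul_eq_mul, mul_one]

/-- Bounds for coordinate projections pass to the completion. -/
theorem proj_ext
    (hdense : ∀ y : Y, ∀ ε : ℝ, 0 < ε → ∃ f : ℕ →₀ ℝ, BY.q (y - j f) < ε)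
    (bY : BioSystem (fun _ : Y => True) BY.q)
    (hv : ∀ n, bY.vec n = j (Finsupp.single n 1)) (hc : ∀ n f, bY.coord n (j f) = f n)
    (D : ℝ) (hD : 0 ≤ D) (A : Finset ℕ) (h : ∀ f, BY.q (j (resF A f)) ≤ D * BY.q (j f)) (y : Y) :
    BY.q (bY.proj A y) ≤ D * BY.kappa ^ 2 * BY.q y := by
  have hκ := BY.one_le_kappa
  have hadd : ∀ x y, bY.proj A (x + y) = bY.proj A x + bY.proj A y := fun x y => by
    simp only [BioSystem.proj, ← Finset.sum_add_distrib]
    refine Finset.sum_congr rfl fun i _ => ?_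
    rw [bY.coord_add _ _ _ trivial trivial, add_smul]
  have hpj : ∀ f, bY.proj A (j f) = j (resF A f) := fun f => by
    rw [j_resF, BioSystem.proj]
    exact Finset.sum_congr rfl fun i _ => by rw [hc, hv]
  have hbd : ∀ A : Finset ℕ, ∃ C, 0 ≤ C ∧ ∀ y, BY.q (bY.proj A y) ≤ C * BY.q y := by
    intro A
    induction A using Finset.induction_on with
    | empty => exact ⟨0, le_rfl, fun y => by simp [BioSystem.proj, BY.q_zero]⟩
    | insert a s ha ih =>
      obtain ⟨C, hC0, hC⟩ := ih
      obtain ⟨E, hE⟩ := bY.coord_bdd a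
      refine ⟨BY.kappa * (|E| * BY.q (bY.vec a) + C), ?_, fun y => ?_⟩
      · have := BY.q_nonneg (bY.vec a)
        positivity
      · have h1 := hC y
        have h2 := hE y trivial
        have h3 := BY.q_nonneg (bY.vec a)
        have h4 := BY.q_nonneg y
        simp only [BioSystem.proj] at h1 ⊢
        rw [Finset.sum_insert ha]
        calc _ ≤ _ := BY.q_triangle _ _
          _ ≤ BY.kappa * (|E| * BY.q y * BY.q (bY.vec a) + C * BY.q y) := by
            rw [BY.q_smul]
            have : |bY.coord a y| ≤ |E| * BY.q y :=
              h2.trans (by gcongr; exact le_abs_self E)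
            gcongr
          _ = _ := by ring
  obtain ⟨C, hC0, hC⟩ := hbd A
  refine le_of_forall_small (M := BY.kappa * C + D * BY.kappa ^ 2) fun ε hε => ?_
  obtain ⟨f, hf⟩ := hdense y ε hε
  have h1 : BY.q (j f) ≤ BY.kappa * (ε + BY.q y) := by
    have := BY.q_triangle (j f - y) y
    rw [sub_add_cancel, BY.q_sub_comm] at this
    exact this.trans (by gcongr)
  have h2 : bY.proj A y = bY.proj A (y - j f) + bY.proj A (j f) := by
    rw [← hadd, sub_add_cancel]
  have h3 := hC (y - j f)
  have h4 := h f
  rw [h2, hpj]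
  calc _ ≤ _ := BY.q_triangle _ _
    _ ≤ BY.kappa * (C * ε + D * (BY.kappa * (ε + BY.q y))) := by
      have : BY.q (bY.proj A (y - j f)) ≤ C * ε := h3.trans (by gcongr)
      have : BY.q (j (resF A f)) ≤ D * (BY.kappa * (ε + BY.q y)) := h4.trans (by gcongr)
      gcongr
    _ = _ := by ring

end

theorem finish_basis {X : Type*} [AddCommGroup X] [Module ℝ X] (B : QuasiBanach X)
    (bX : QBasis B) (hsemi : bX.toBioSystem.SemiNormalized)
    (S : SubsymmetricSpace) (σ : OrderedPartition)
    (hLRP : LRP S.Lam) (hURP : URP S.Lam)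
    (hMN : ∃ c : ℝ, ∀ r : ℕ, (σ.M r : ℝ) ≤ c * (σ.N r : ℝ))
    {Y : Type*} [AddCommGroup Y] [Module ℝ Y] (BY : QuasiBanach Y)
    (j : (ℕ →₀ ℝ) →ₗ[ℝ] Y)
    (hiso : ∀ f : ℕ →₀ ℝ, BY.q (j f) = YNorm B bX S σ ⇑f)
    (hdense : ∀ y : Y, ∀ ε : ℝ, 0 < ε → ∃ f : ℕ →₀ ℝ, BY.q (y - j f) < ε) :
    ∃ bY : QBasis BY, (∀ n : ℕ, bY.vec n = j (Finsupp.single n 1)) ∧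
      bY.toBioSystem.ASU := by
  have hκ := BY.one_le_kappa
  -- the coordinate functionals
  have hco : ∀ n, ∃ L : Y → ℝ, (∀ y z, L (y + z) = L y + L z) ∧
      (∀ (a : ℝ) y, L (a • y) = a * L y) ∧
      (∃ C, ∀ y, |L y| ≤ C * BY.q y) ∧ ∀ f : ℕ →₀ ℝ, L (j f) = f n := by
    intro n
    obtain ⟨C, hC0, hC⟩ := coordY B bX S σ hsemi n
    obtain ⟨L, h1, h2, h3, h4⟩ := ext_fun BY j hdense (Finsupp.lapply n) C hC0
      (fun f => by rw [hiso]; exact hC f (FS.coe f))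
    exact ⟨L, h1, h2, ⟨_, h3⟩, h4⟩
  choose L hLadd hLsmul hLb hLj using hco
  let b0 : BioSystem (fun _ : Y => True) BY.q :=
    { vec := fun n => j (Finsupp.single n 1)
      vec_mem := fun _ => trivial
      coord := L
      coord_add := fun n f g _ _ => hLadd n f g
      coord_smul := fun n a f _ => hLsmul n a f
      coord_bdd := fun n => by
        obtain ⟨C, hC⟩ := hLb n
        exact ⟨C, fun f _ => hC f⟩
      biorth := fun m n => by
        rw [hLj, Finsupp.single_apply]
        simp only [eq_comm] }
  have hb0v : ∀ n, b0.vec n = j (Finsupp.single n 1) := fun _ => rfl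
  have hb0c : ∀ n f, b0.coord n (j f) = f n := hLj
  -- constants
  obtain ⟨c', hc'⟩ := hMN
  set c := max c' 1 with hcdef
  have hc1 : 1 ≤ c := le_max_right _ _
  have hc : ∀ r, (σ.M r : ℝ) ≤ c * σ.N r := fun r =>
    (hc' r).trans (by gcongr; exact le_max_left _ _)
  set θ := c / (c + 1) with hθ
  have hθ0 : 0 < θ := by positivity
  have hθ1 : θ < 1 := by rw [hθ, div_lt_one (by positivity)]; linarith
  obtain ⟨D1, hD1, hmain⟩ := main_est B bX S σ hsemi hLRP hURP θ hθ0 hθ1 (c + 1) (by linarith)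
  obtain ⟨D2, hD2, hblock⟩ := block_est B bX S σ
  have hK : ∀ r, ∀ A : Finset ℕ, ((σ.part r ∩ A).card : ℝ) ≤ (c + 1) * θ ^ 0 * σ.N r := by
    intro r A
    have h1 : ((σ.part r ∩ A).card : ℝ) ≤ σ.N r := by
      exact_mod_cast Finset.card_le_card Finset.inter_subset_left
    have h2 : (0 : ℝ) ≤ σ.N r := by positivity
    rw [pow_zero]
    nlinarith
  -- partial sums
  have hpart : ∀ m f, BY.q (j (resF (Finset.range m) f)) ≤
      BY.kappa * (D2 + D1) * BY.q (j f) := by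
    intro m f
    obtain ⟨r, hr⟩ := σ.covers m
    have hle : σ.M r ≤ m := by
      by_contra h
      have := (σ.lt_M_iff (r := r) hr).1 (by omega)
      omega
    have hlt : m < σ.M (r + 1) := (σ.lt_M_iff hr).2 (by omega)
    have hsplit : resF (Finset.range m) f =
        resF (Finset.range (σ.M r)) f + resF (Finset.Ico (σ.M r) m) f := by
      simp only [resF, Finset.range_eq_Ico]
      exact (Finset.sum_Ico_consecutive _ (Nat.zero_le _) hle).symm
    have h1 : BY.q (j (resF (Finset.range (σ.M r)) f)) ≤ D2 * BY.q (j f) := by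
      rw [hiso, hiso, resF_coe]
      exact hblock _ (FS.coe f) r
    have h2 : BY.q (j (resF (Finset.Ico (σ.M r) m) f)) ≤ D1 * BY.q (j f) := by
      rw [hiso, hiso, resF_coe]
      refine hmain _ (FS.coe f) _ r (fun n hn => ?_) (fun i => ?_)
      · rw [Finset.eq_empty_iff_forall_notMem]
        intro k hk
        rw [Finset.mem_inter, Finset.mem_Ico] at hk
        have := (σ.lt_M_iff (r := r) hk.1).2 hn
        omega
      · rcases Nat.eq_zero_or_pos i with hi | hi
        · subst hi
          exact hK _ _
        · have : σ.part (r + i) ∩ Finset.Ico (σ.M r) m = ∅ := by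
            rw [Finset.eq_empty_iff_forall_notMem]
            intro k hk
            rw [Finset.mem_inter, Finset.mem_Ico] at hk
            have := (σ.lt_M_iff (r := r + 1) hk.1).1 (by omega)
            omega
          rw [this]
          simp only [Finset.card_empty, Nat.cast_zero]
          positivity
    rw [hsplit, map_add]
    calc _ ≤ _ := BY.q_triangle _ _
      _ ≤ BY.kappa * (D2 * BY.q (j f) + D1 * BY.q (j f)) := by gcongr
      _ = _ := by ring
  have hpartY : ∀ m y, BY.q (b0.proj (Finset.range m) y) ≤
      BY.kappa * (D2 + D1) * BY.kappa ^ 2 * BY.q y := fun m y =>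
    proj_ext BY j hdense b0 hb0v hb0c _ (by positivity) _ (hpart m) y
  have hexp : ∀ y, QTendsto BY.q (fun m => b0.proj (Finset.range m) y) y := by
    intro y ε hε
    set F := BY.kappa * (D2 + D1) * BY.kappa ^ 2 with hF
    have hF0 : 0 ≤ F := by positivity
    obtain ⟨f, hf⟩ := hdense y (ε / (BY.kappa * (F + 1))) (by positivity)
    obtain ⟨m₀, hm₀⟩ := FS.coe f
    refine ⟨m₀, fun m hm => ?_⟩
    have h1 : b0.proj (Finset.range m) (j f) = j f := by
      have e1 : b0.proj (Finset.range m) (j f) = j (resF (Finset.range m) f) := by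
        rw [j_resF, BioSystem.proj]
        exact Finset.sum_congr rfl fun i _ => by rw [hb0c]
      rw [e1]
      congr 1
      ext i
      rw [resF_coe]
      by_cases hi : i < m
      · simp [res, hi]
      · simp [res, hi, hm₀ i (by omega)]
    have h2 : b0.proj (Finset.range m) y - y =
        b0.proj (Finset.range m) (y - j f) + (j f - y) := by
      have : b0.proj (Finset.range m) y =
          b0.proj (Finset.range m) (y - j f) + b0.proj (Finset.range m) (j f) := by
        simp only [BioSystem.proj, ← Finset.sum_add_distrib]
        refine Finset.sum_congr rfl fun i _ => ?_
        rw [← add_smul, ← b0.coord_add _ _ _ trivial trivial, sub_add_cancel]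
      rw [this, h1]
      abel
    have h3 := hpartY m (y - j f)
    rw [h2]
    have hf' := hf
    rw [lt_div_iff₀ (by positivity)] at hf'
    calc _ ≤ _ := BY.q_triangle _ _
      _ ≤ BY.kappa * (F * BY.q (y - j f) + BY.q (y - j f)) := by
        rw [BY.q_sub_comm (j f) y]
        gcongr
      _ = BY.q (y - j f) * (BY.kappa * (F + 1)) := by ring
      _ < ε := hf'
  refine ⟨{ b0 with expansion := fun y _ => hexp y }, fun n => rfl, ?_⟩
  -- asymptotic suppression unconditionality
  refine ⟨D1 * BY.kappa ^ 2, fun A hA y _ => ?_⟩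
  refine proj_ext BY j hdense b0 hb0v hb0c D1 hD1 A (fun f => ?_) y
  rw [hiso, hiso, resF_coe]
  rcases A.eq_empty_or_nonempty with hAe | hAne
  · refine hmain _ (FS.coe f) _ 0 (fun n hn => by omega) (fun i => ?_)
    rw [hAe]
    simp only [Finset.inter_empty, Finset.card_empty, Nat.cast_zero]
    positivity
  obtain ⟨r, hr⟩ := σ.covers (A.min' hAne)
  have hcardA : A.card ≤ σ.M (r + 1) := by
    have h1 := hA _ (A.min'_mem hAne)
    have h2 := (σ.lt_M_iff (r := r + 1) hr).2 (by omega)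
    omega
  refine hmain _ (FS.coe f) A r (fun n hn => ?_) (fun i => ?_)
  · rw [Finset.eq_empty_iff_forall_notMem]
    intro k hk
    rw [Finset.mem_inter] at hk
    have h1 := σ.lt_of_lt hn k hk.1 _ hr
    have h2 := A.min'_le k hk.2
    omega
  · rcases i with _ | i
    · exact hK _ _
    · have hgrow : ∀ i, (σ.M (r + 1) : ℝ) ≤ θ ^ i * σ.M (r + 1 + i) := by
        intro i
        induction i with
        | zero => simp
        | succ i ih =>
          have h1 := hc (r + 1 + i)
          have h2 : (σ.M (r + 1 + (i + 1)) : ℝ) = σ.M (r + 1 + i) + σ.N (r + 1 + i) := by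
            rw [← add_assoc, σ.M_succ]; push_cast; rfl
          have h3 : (σ.M (r + 1 + i) : ℝ) ≤ θ * σ.M (r + 1 + (i + 1)) := by
            rw [h2, hθ, div_mul_eq_mul_div, le_div_iff₀ (by positivity)]
            nlinarith
          calc _ ≤ _ := ih
            _ ≤ θ ^ i * (θ * σ.M (r + 1 + (i + 1))) := by gcongr
            _ = _ := by ring
      have h1 : ((σ.part (r + (i + 1)) ∩ A).card : ℝ) ≤ σ.M (r + 1) := by
        exact_mod_cast (Finset.card_le_card Finset.inter_subset_right).trans hcardA
      have e : r + 1 + i = r + (i + 1) := by ring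
      have h2 := hgrow i
      have h3 := hc (r + (i + 1))
      rw [e] at h2
      have h4 : (c + 1) * θ = c := by rw [hθ]; field_simp
      calc _ ≤ _ := h1
        _ ≤ _ := h2
        _ ≤ θ ^ i * (c * σ.N (r + (i + 1))) := by gcongr
        _ = θ ^ i * ((c + 1) * θ * σ.N (r + (i + 1))) := by rw [h4]
        _ = _ := by ring

theorem statement6 {X : Type*} [AddCommGroup X] [Module ℝ X] (B : QuasiBanach X)
    (bX : QBasis B) (hsemi : bX.toBioSystem.SemiNormalized)
    (S : SubsymmetricSpace) (σ : OrderedPartition)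
    (hLRP : LRP S.Lam) (hURP : URP S.Lam)
    (hMN : ∃ c : ℝ, ∀ r : ℕ, (σ.M r : ℝ) ≤ c * (σ.N r : ℝ))
    {Y : Type*} [AddCommGroup Y] [Module ℝ Y] (BY : QuasiBanach Y)
    (j : (ℕ →₀ ℝ) →ₗ[ℝ] Y)
    (hiso : ∀ f : ℕ →₀ ℝ, BY.q (j f) = YNorm B bX S σ ⇑f)
    (hdense : ∀ y : Y, ∀ ε : ℝ, 0 < ε → ∃ f : ℕ →₀ ℝ, BY.q (y - j f) < ε) :
    ∃ bY : QBasis BY, (∀ n : ℕ, bY.vec n = j (Finsupp.single n 1)) ∧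
      bY.toBioSystem.ASU := by
  exact finish_basis B bX hsemi S σ hLRP hURP hMN BY j hiso hdense

end AGpaper
end
end

section
/- Let 𝒳 be a Schauder basis of a quasi-Banach space. Suppose there exist D∈(0,∞), b∈ℕ, and d∈ℕ such that ‖S_A‖ ≤ D for every finite A⊆ℕ with |A| > d and b|A| < min A. Then 𝒳 is asymptotically suppression unconditional, i.e., there is a constant D' such that ‖S_A‖ ≤ D' for every finite A⊆ℕ with |A| < min A. -/
noncomputable section

open Classical
open scoped ENNReal NNReal

namespace AGpaper

/-! ### Biorthogonal systems and Schauder bases -/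

variable {X : Type*} [AddCommGroup X] [Module ℝ X]

variable {mem : X → Prop} {nrm : X → ℝ}

section helpers9

theorem h9_coord_sum {X : Type*} [AddCommGroup X] [Module ℝ X] {B : QuasiBanach X}
    (𝒳 : QBasis B) (n : ℕ) (A : Finset ℕ) (c : ℕ → ℝ) :
    𝒳.coord n (∑ k ∈ A, c k • 𝒳.vec k) = if n ∈ A then c n else 0 := by
  induction A using Finset.induction_on with
  | empty =>
    have := 𝒳.coord_smul n 0 0 trivial
    simpa using this
  | insert a s ha ih =>
    rw [Finset.sum_insert ha, 𝒳.coord_add n _ _ trivial trivial, ih,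
      𝒳.coord_smul n _ _ trivial, 𝒳.biorth]
    by_cases h1 : n = a
    · subst h1; simp [ha]
    · simp [h1]

theorem h9_proj_proj {X : Type*} [AddCommGroup X] [Module ℝ X] {B : QuasiBanach X}
    (𝒳 : QBasis B) (A C : Finset ℕ) (f : X) :
    𝒳.toBioSystem.proj A (𝒳.toBioSystem.proj C f) = 𝒳.toBioSystem.proj (A ∩ C) f := by
  unfold BioSystem.proj
  rw [← Finset.filter_mem_eq_inter, Finset.sum_filter]
  refine Finset.sum_congr rfl fun n _ => ?_
  rw [h9_coord_sum 𝒳 n C (fun k => 𝒳.coord k f)]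
  split_ifs <;> simp

theorem h9_proj_split {X : Type*} [AddCommGroup X] [Module ℝ X] {B : QuasiBanach X}
    (𝒳 : QBasis B) (A C : Finset ℕ) (hC : C ⊆ A) (f : X) {c1 c2 : ℝ}
    (h1 : B.q (𝒳.toBioSystem.proj C f) ≤ c1 * B.q f)
    (h2 : B.q (𝒳.toBioSystem.proj (A \ C) f) ≤ c2 * B.q f) :
    B.q (𝒳.toBioSystem.proj A f) ≤ (B.kappa * (c1 + c2)) * B.q f := by
  have e : 𝒳.toBioSystem.proj A f
      = 𝒳.toBioSystem.proj C f + 𝒳.toBioSystem.proj (A \ C) f := by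
    unfold BioSystem.proj
    rw [add_comm, Finset.sum_sdiff hC]
  rw [e]
  refine (B.q_triangle _ _).trans ?_
  rw [mul_assoc, add_mul]
  have := B.one_le_kappa
  gcongr

theorem h9_proj_empty {X : Type*} [AddCommGroup X] [Module ℝ X] {B : QuasiBanach X}
    (𝒳 : QBasis B) (f : X) : B.q (𝒳.toBioSystem.proj ∅ f) = 0 := by
  rw [B.q_eq_zero_iff]; simp [BioSystem.proj]

/-- Uniform bound for the singleton projections. -/
theorem h9_single {X : Type*} [AddCommGroup X] [Module ℝ X] (B : QuasiBanach X)
    (𝒳 : QBasis B) (D : ℝ) (hD : 0 < D) (b d : ℕ)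
    (h : ∀ A : Finset ℕ, d < A.card → (∀ n ∈ A, b * A.card < n) →
      ∀ f : X, B.q (𝒳.toBioSystem.proj A f) ≤ D * B.q f) :
    ∃ K : ℝ, 0 ≤ K ∧ ∀ n f, B.q (𝒳.toBioSystem.proj {n} f) ≤ K * B.q f := by
  choose C hC using 𝒳.coord_bdd
  let g : ℕ → ℝ := fun n => |C n| * B.q (𝒳.vec n)
  have hg : ∀ n, 0 ≤ g n := fun n => mul_nonneg (abs_nonneg _) (B.q_nonneg _)
  have hS : 0 ≤ ∑ n ∈ Finset.range (b * (d + 1) + 1), g n :=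
    Finset.sum_nonneg fun n _ => hg n
  refine ⟨D * D + ∑ n ∈ Finset.range (b * (d + 1) + 1), g n, by positivity, fun n f => ?_⟩
  have hq := B.q_nonneg f
  by_cases hn : n < b * (d + 1) + 1
  · have h1 : B.q (𝒳.toBioSystem.proj {n} f) ≤ g n * B.q f := by
      simp only [BioSystem.proj, Finset.sum_singleton, B.q_smul, g]
      have h2 : |𝒳.coord n f| ≤ |C n| * B.q f :=
        (hC n f trivial).trans (mul_le_mul_of_nonneg_right (le_abs_self _) hq)
      calc _ ≤ (|C n| * B.q f) * B.q (𝒳.vec n) :=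
            mul_le_mul_of_nonneg_right h2 (B.q_nonneg _)
        _ = _ := by ring
    have h3 : g n ≤ ∑ n ∈ Finset.range (b * (d + 1) + 1), g n :=
      Finset.single_le_sum (fun i _ => hg i) (Finset.mem_range.2 hn)
    refine h1.trans (mul_le_mul_of_nonneg_right ?_ hq)
    nlinarith
  · let E := Finset.Icc n (n + d)
    let F := insert n (Finset.Icc (n + d + 1) (n + d + d))
    have hE : E.card = d + 1 := by simp [E]; omega
    have hF : F.card = d + 1 := by
      rw [Finset.card_insert_of_notMem (by simp <;> omega)]; simp <;> omega
    have hEF : E ∩ F = {n} := by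
      ext k; simp [E, F]; omega
    have hE' := h E (by omega) (by
      intro k hk; rw [hE]; simp [E] at hk; omega)
    have hF' := h F (by omega) (by
      intro k hk; rw [hF]; simp [F] at hk; omega)
    rw [← hEF, ← h9_proj_proj]
    calc _ ≤ D * (D * B.q f) :=
          (hE' _).trans (mul_le_mul_of_nonneg_left (hF' f) hD.le)
      _ = D * D * B.q f := by ring
      _ ≤ _ := mul_le_mul_of_nonneg_right (by linarith) hq

/-- Projections on sets of bounded size are bounded. -/
theorem h9_small {X : Type*} [AddCommGroup X] [Module ℝ X] (B : QuasiBanach X)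
    (𝒳 : QBasis B) (K : ℝ) (hK : 0 ≤ K)
    (h : ∀ n f, B.q (𝒳.toBioSystem.proj {n} f) ≤ K * B.q f) (M : ℕ) :
    ∃ C : ℝ, 0 ≤ C ∧ ∀ A : Finset ℕ, A.card ≤ M → ∀ f,
      B.q (𝒳.toBioSystem.proj A f) ≤ C * B.q f := by
  have hk := B.one_le_kappa
  induction M with
  | zero =>
    refine ⟨0, le_rfl, fun A hA f => ?_⟩
    have : A = ∅ := by simpa using hA
    rw [this, h9_proj_empty]; simp
  | succ M ih =>
    obtain ⟨C, hC0, hC⟩ := ih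
    refine ⟨B.kappa * (K + C), by positivity, fun A hA f => ?_⟩
    rcases A.eq_empty_or_nonempty with rfl | ⟨n, hn⟩
    · rw [h9_proj_empty]
      have := B.q_nonneg f
      positivity
    · refine h9_proj_split 𝒳 A {n} (by simpa using hn) f (h n f) (hC _ ?_ f)
      rw [Finset.card_sdiff_of_subset (by simpa using hn)]
      simp; omega

theorem h9_chunks {X : Type*} [AddCommGroup X] [Module ℝ X] (B : QuasiBanach X)
    (𝒳 : QBasis B) (D : ℝ) (hD : 0 < D) (b d : ℕ)
    (h : ∀ A : Finset ℕ, d < A.card → (∀ n ∈ A, b * A.card < n) →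
      ∀ f : X, B.q (𝒳.toBioSystem.proj A f) ≤ D * B.q f)
    (S : ℝ) (hS : 0 ≤ S) (hs : ∀ A : Finset ℕ, A.card ≤ d → ∀ f,
      B.q (𝒳.toBioSystem.proj A f) ≤ S * B.q f) (k : ℕ) :
    ∃ C : ℝ, 0 ≤ C ∧ ∀ s, d < s → ∀ A : Finset ℕ, A.card ≤ k * s → (∀ n ∈ A, b * s < n) →
      ∀ f, B.q (𝒳.toBioSystem.proj A f) ≤ C * B.q f := by
  have hk := B.one_le_kappa
  induction k with
  | zero =>
    refine ⟨0, le_rfl, fun s _ A hA _ f => ?_⟩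
    have : A = ∅ := by simpa using hA
    rw [this, h9_proj_empty]; simp
  | succ k ih =>
    obtain ⟨C, hC0, hC⟩ := ih
    have hp : 0 ≤ B.kappa * (D + C) := by positivity
    refine ⟨S + B.kappa * (D + C), by positivity, fun s hds A hA hb f => ?_⟩
    have hq := B.q_nonneg f
    by_cases hAd : A.card ≤ d
    · exact (hs A hAd f).trans (mul_le_mul_of_nonneg_right (by linarith) hq)
    · obtain ⟨E, hEA, hE⟩ := Finset.exists_subset_card_eq (min_le_right s A.card)
      have hEs : E.card ≤ s := hE ▸ min_le_left _ _
      have h1 := h E (by omega) (fun n hn =>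
        (Nat.mul_le_mul_left b hEs).trans_lt (hb n (hEA hn))) f
      have h2 := hC s hds (A \ E) (by
        rw [Finset.card_sdiff_of_subset hEA]
        rw [Nat.succ_mul] at hA
        omega) (fun n hn => hb n (Finset.mem_sdiff.1 hn).1) f
      exact (h9_proj_split 𝒳 A E hEA f h1 h2).trans
        (mul_le_mul_of_nonneg_right (by linarith) hq)

end helpers9

theorem statement9 {X : Type*} [AddCommGroup X] [Module ℝ X] (B : QuasiBanach X)
    (𝒳 : QBasis B) (D : ℝ) (hD : 0 < D) (b d : ℕ) (hb : 0 < b)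
    (h : ∀ A : Finset ℕ, d < A.card → (∀ n ∈ A, b * A.card < n) →
      ∀ f : X, B.q (𝒳.toBioSystem.proj A f) ≤ D * B.q f) :
    𝒳.toBioSystem.ASU := by
  obtain ⟨K, hK, hK1⟩ := h9_single B 𝒳 D hD b d h
  obtain ⟨S, hS, hS1⟩ := h9_small B 𝒳 K hK hK1 d
  obtain ⟨T, hT, hT1⟩ := h9_small B 𝒳 K hK hK1 (b * (d + 1))
  obtain ⟨C, hC, hC1⟩ := h9_chunks B 𝒳 D hD b d h S hS hS1 (2 * b)
  refine ⟨T + C, fun A hA f _ => ?_⟩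
  have hq := B.q_nonneg f
  by_cases hc : A.card ≤ b * (d + 1)
  · exact (hT1 A hc f).trans (mul_le_mul_of_nonneg_right (by linarith) hq)
  · have h1 : d + 1 ≤ A.card / b := by
      rw [Nat.le_div_iff_mul_le hb, Nat.mul_comm]; omega
    have h2 : b * (A.card / b) ≤ A.card := Nat.mul_div_le _ _
    have h3 : A.card < b * (A.card / b + 1) := Nat.lt_mul_div_succ _ hb
    refine (hC1 (A.card / b) (by omega) A ?_ (fun n hn => h2.trans_lt (hA n hn)) f).trans
      (mul_le_mul_of_nonneg_right (by linarith) hq)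
    have h4 : b * (A.card / b + 1) ≤ b * (2 * (A.card / b)) :=
      Nat.mul_le_mul_left b (by omega)
    calc A.card ≤ b * (2 * (A.card / b)) := by omega
      _ = 2 * b * (A.card / b) := by ring

end AGpaper
end
end

section
/- Let 𝕊 be a superreflexive subsymmetric sequence space. Then the fundamental function Λ[𝕊]=(Λ_m[𝕊]) has both the upper regularity property and the lower regularity property. -/
noncomputable section

open Classical
open scoped ENNReal NNReal

namespace AGpaper

/-! ### Biorthogonal systems and Schauder bases -/

variable {X : Type*} [AddCommGroup X] [Module ℝ X]

variable {mem : X → Prop} {nrm : X → ℝ}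

/-- `f` is a signed indicator of a set of cardinality `n`. -/
def SI (n : ℕ) (f : ℕ → ℝ) : Prop :=
  ∃ A : Finset ℕ, A.card = n ∧ (∀ j ∈ A, |f j| = 1) ∧ ∀ j, j ∉ A → f j = 0

lemma indic_mem (S : SubsymmetricSpace) (n : ℕ) : S.mem (indic n) := by
  induction n with
  | zero =>
    have : indic 0 = 0 := by ext j; simp [indic]
    rw [this]; exact S.zero_mem
  | succ n ih =>
    have : indic (n + 1) = indic n + unitVec n := by
      ext j
      simp only [indic, unitVec, Pi.add_apply]
      rcases lt_trichotomy j n with h | h | h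
      · rw [if_pos (by omega), if_pos h, if_neg (by omega)]; simp
      · rw [if_pos (by omega), if_neg (by omega), if_pos h]; simp
      · rw [if_neg (by omega), if_neg (by omega), if_neg (by omega)]; simp
    rw [this]; exact S.add_mem ih (S.unit_mem n)

lemma SI_norm (S : SubsymmetricSpace) {n : ℕ} {f : ℕ → ℝ} (h : SI n f) :
    S.mem f ∧ S.nrm f = S.Lam n := by
  obtain ⟨A, hA, h1, h0⟩ := h
  let φ : ℕ → ℕ := fun i => if hi : i < n then A.orderEmbOfFin hA ⟨i, hi⟩ else A.sup id + 1 + i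
  have hlt : ∀ i (hi : i < n), φ i = A.orderEmbOfFin hA ⟨i, hi⟩ := fun i hi => by
    simp only [φ, dif_pos hi]
  have hge : ∀ i, ¬ i < n → φ i = A.sup id + 1 + i := fun i hi => by
    simp only [φ, dif_neg hi]
  have hmemA : ∀ i, i < n → φ i ∈ A := fun i hi => by
    rw [hlt i hi]; exact Finset.orderEmbOfFin_mem A hA _
  have hle : ∀ j ∈ A, j ≤ A.sup id := fun j hj => Finset.le_sup (f := id) hj
  have hφ : StrictMono φ := by
    intro a b hab
    by_cases hb : b < n
    · have ha : a < n := hab.trans hb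
      rw [hlt a ha, hlt b hb]
      exact (A.orderEmbOfFin hA).strictMono hab
    · rw [hge b hb]
      by_cases ha : a < n
      · have := hle _ (hmemA a ha); omega
      · rw [hge a ha]; omega
  let ε : ℕ → ℝ := fun i => if i < n then f (φ i) else 1
  have hε : ∀ i, |ε i| = 1 := by
    intro i
    by_cases hi : i < n
    · simp only [ε, if_pos hi]; exact h1 _ (hmemA i hi)
    · simp only [ε, if_neg hi]; simp
  have key : spread φ ε (indic n) = f := by
    ext j
    unfold spread
    split_ifs with h
    · have hc := h.choose_spec
      generalize h.choose = i at hc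
      by_cases hi : i < n
      · simp only [ε, indic, if_pos hi]; rw [hc]; simp
      · simp only [indic, if_neg hi, mul_zero]
        symm; apply h0
        intro hj
        have := hle j hj
        rw [hge i hi] at hc; omega
    · symm; apply h0
      intro hj
      apply h
      have : j ∈ Set.range (A.orderEmbOfFin hA) := by
        rw [Finset.range_orderEmbOfFin]; exact hj
      obtain ⟨⟨i, hi⟩, hij⟩ := this
      exact ⟨i, by rw [hlt i hi]; exact hij⟩
  have := S.subsym (indic_mem S n) ε hε φ hφ
  rw [key] at this
  exact this

lemma SI_indic (n : ℕ) : SI n (indic n) :=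
  ⟨Finset.range n, by simp, by intro j hj; simp at hj; simp [indic, hj], by
    intro j hj; simp at hj; simp [indic, hj]⟩

/-- Disjoint extension. -/
lemma SI_extend {n : ℕ} {f : ℕ → ℝ} (h : SI n f) :
    ∃ g, SI n g ∧ SI (n + n) (f + g) ∧ SI (n + n) (f - g) := by
  obtain ⟨A, hA, h1, h0⟩ := h
  have hle : ∀ j ∈ A, j ≤ A.sup id := fun j hj => Finset.le_sup (f := id) hj
  let K := A.sup id + 1
  let B := Finset.Ico K (K + n)
  have hd : Disjoint A B := by
    rw [Finset.disjoint_left]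
    intro j hj hB
    have := hle j hj
    simp only [B, K, Finset.mem_Ico] at hB
    omega
  have hB : B.card = n := by simp [B]
  refine ⟨fun j => if j ∈ B then 1 else 0, ⟨B, hB, ?_, ?_⟩, ⟨A ∪ B, ?_, ?_, ?_⟩,
    ⟨A ∪ B, ?_, ?_, ?_⟩⟩
  · intro j hj; simp [hj]
  · intro j hj; simp [hj]
  · rw [Finset.card_union_of_disjoint hd, hA, hB]
  · intro j hj
    rcases Finset.mem_union.1 hj with hj | hj
    · have := Finset.disjoint_left.1 hd hj
      simp [this, h1 j hj]
    · have := Finset.disjoint_right.1 hd hj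
      simp [hj, h0 j this]
  · intro j hj
    rw [Finset.mem_union, not_or] at hj
    simp [hj.2, h0 j hj.1]
  · rw [Finset.card_union_of_disjoint hd, hA, hB]
  · intro j hj
    rcases Finset.mem_union.1 hj with hj | hj
    · have := Finset.disjoint_left.1 hd hj
      simp [this, h1 j hj]
    · have := Finset.disjoint_right.1 hd hj
      simp [hj, h0 j this]
  · intro j hj
    rw [Finset.mem_union, not_or] at hj
    simp [hj.2, h0 j hj.1]

/-- Splitting into halves. -/
lemma SI_split {n : ℕ} {f : ℕ → ℝ} (h : SI (n + n) f) :
    ∃ g k, SI n g ∧ SI n k ∧ f = g + k ∧ SI (n + n) (g - k) := by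
  obtain ⟨A, hA, h1, h0⟩ := h
  obtain ⟨B, hBA, hB⟩ := Finset.exists_subset_card_eq (s := A) (n := n) (by omega)
  refine ⟨fun j => if j ∈ B then f j else 0, fun j => if j ∈ B then 0 else f j,
    ⟨B, hB, ?_, ?_⟩, ⟨A \ B, ?_, ?_, ?_⟩, ?_, ⟨A, hA, ?_, ?_⟩⟩
  · intro j hj; simp [hj, h1 j (hBA hj)]
  · intro j hj; simp [hj]
  · rw [Finset.card_sdiff_of_subset hBA]; omega
  · intro j hj
    rw [Finset.mem_sdiff] at hj
    simp [hj.2, h1 j hj.1]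
  · intro j hj
    rw [Finset.mem_sdiff, not_and_not_right] at hj
    by_cases hjB : j ∈ B
    · simp [hjB]
    · simp [hjB, h0 j (fun h => hjB (hj h))]
  · ext j
    by_cases hjB : j ∈ B <;> simp [hjB]
  · intro j hj
    by_cases hjB : j ∈ B <;> simp [hjB, h1 j hj]
  · intro j hj
    simp [h0 j hj]

lemma Lam_double (S : SubsymmetricSpace) (n : ℕ) :
    S.Lam n ≤ S.Lam (n + n) ∧ S.Lam (n + n) ≤ 2 * S.Lam n := by
  obtain ⟨g, hg, hp, hm⟩ := SI_extend (SI_indic n)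
  have e0 := SI_norm S (SI_indic n)
  have eg := SI_norm S hg
  have ep := SI_norm S hp
  have em := SI_norm S hm
  constructor
  · have h := S.nrm_triangle ep.1 em.1
    have e : indic n + g + (indic n - g) = (2 : ℝ) • indic n := by
      ext j; simp; ring
    rw [e, S.nrm_smul, ep.2, em.2, e0.2] at h
    norm_num at h
    linarith
  · have h := S.nrm_triangle e0.1 eg.1
    rw [ep.2, e0.2, eg.2] at h
    linarith

lemma Lam_pos (S : SubsymmetricSpace) {n : ℕ} (hn : 1 ≤ n) : 0 < S.Lam n := by
  refine lt_of_le_of_ne (S.nrm_nonneg _) (fun h => ?_)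
  have := (S.nrm_eq_zero (indic_mem S n)).1 h.symm
  have := congrFun this 0
  simp [indic] at this
  omega

/-- The consequences of superreflexivity that we use. -/
lemma super_data (S : SubsymmetricSpace) (hsuper : S.Superreflexive) :
    ∃ (N : (ℕ → ℝ) → ℝ) (c C q : ℝ), 0 < c ∧ 0 < C ∧ 0 < q ∧ q < 1 ∧
      (∀ (a : ℝ) f, S.mem f → N (a • f) = |a| * N f) ∧
      (∀ f, S.mem f → c * S.nrm f ≤ N f ∧ N f ≤ C * S.nrm f) ∧
      (∀ f g R, 0 < R → S.mem f → S.mem g → S.mem (f - g) → S.mem (f + g) → N f ≤ R → N g ≤ R →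
        c / C * R ≤ N (f - g) → N (f + g) ≤ 2 * q * R) := by
  obtain ⟨N, -, hs, -, ⟨c, C, hc, hcC⟩, hu⟩ := hsuper
  have hC : 0 < C := by
    have h := hcC _ (indic_mem S 1)
    have hp : 0 < S.nrm (indic 1) := Lam_pos S le_rfl
    have : 0 < C * S.nrm (indic 1) := lt_of_lt_of_le (by positivity) (h.1.trans h.2)
    exact pos_of_mul_pos_left this hp.le
  obtain ⟨δ, hδ, hd⟩ := hu (c / C) (by positivity)
  refine ⟨N, c, C, 1 - min δ (1/2), hc, hC, ?_, ?_, hs, hcC, ?_⟩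
  · have := min_le_right δ (1/2); linarith
  · have : 0 < min δ (1/2) := lt_min hδ (by norm_num)
    linarith
  · intro f g R hR hf hg hfg hfg' h1 h2 h3
    have hR' : |R⁻¹| = R⁻¹ := abs_of_pos (by positivity)
    have h := hd (R⁻¹ • f) (R⁻¹ • g) (S.smul_mem _ hf) (S.smul_mem _ hg)
      (by rw [hs _ _ hf, hR', inv_mul_le_iff₀ hR]; linarith)
      (by rw [hs _ _ hg, hR', inv_mul_le_iff₀ hR]; linarith)
      (by rw [← smul_sub, hs _ _ hfg, hR', le_inv_mul_iff₀ hR]; linarith)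
    rw [← smul_add, hs _ _ hfg', hR', inv_mul_le_iff₀ hR] at h
    have := min_le_left δ (1/2)
    nlinarith

theorem statement11 (S : SubsymmetricSpace) (hsuper : S.Superreflexive) :
    URP S.Lam ∧ LRP S.Lam := by
  obtain ⟨N, c, C, q, hc, hC, hq0, hq1, hs, hcC, huc⟩ := super_data S hsuper
  obtain ⟨k, hk⟩ := exists_pow_lt_of_lt_one (show 0 < c / (2 * C) by positivity) hq1
  have hk' : 2 * (q ^ k * C) ≤ c := by
    rw [lt_div_iff₀ (by positivity)] at hk; linarith
  have hdbl : ∀ k m : ℕ, 2 ^ (k + 1) * m = 2 ^ k * m + 2 ^ k * m := fun k m => by ring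
  have hpos1 : ∀ k m : ℕ, 1 ≤ m → 1 ≤ 2 ^ k * m := fun k m hm =>
    Nat.mul_pos (by positivity) hm
  constructor
  · refine ⟨2 ^ k, by positivity, fun m hm => ?_⟩
    have ind : ∀ k : ℕ, ∃ R : ℝ, 0 < R ∧ R ≤ (2 * q) ^ k * (C * S.Lam m) ∧
        R ≤ C * S.Lam (2 ^ k * m) ∧ ∀ f, SI (2 ^ k * m) f → N f ≤ R := by
      intro k
      induction k with
      | zero =>
        have := Lam_pos S hm
        refine ⟨C * S.Lam m, by positivity, by simp, by simp, fun f hf => ?_⟩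
        simp only [pow_zero, one_mul] at hf
        have e := SI_norm S hf
        rw [← e.2]; exact (hcC f e.1).2
      | succ k ih =>
        obtain ⟨R, hR, h1, h2, h3⟩ := ih
        have hL := Lam_pos S (hpos1 (k + 1) m hm)
        refine ⟨min (2 * q * R) (C * S.Lam (2 ^ (k + 1) * m)), lt_min (by positivity)
          (by positivity), (min_le_left _ _).trans ?_, min_le_right _ _, fun f hf => le_min ?_ ?_⟩
        · rw [pow_succ]
          have := mul_le_mul_of_nonneg_left h1 (show 0 ≤ 2 * q by positivity)
          linarith
        · have ef := SI_norm S hf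
          rw [hdbl] at hf
          obtain ⟨g, l, hg, hl, rfl, hgl⟩ := SI_split hf
          have egl := SI_norm S hgl
          refine huc g l R hR (SI_norm S hg).1 (SI_norm S hl).1 egl.1 ef.1 (h3 g hg) (h3 l hl) ?_
          refine le_trans ?_ (hcC _ egl.1).1
          rw [egl.2, div_mul_eq_mul_div, div_le_iff₀ hC]
          have := mul_le_mul_of_nonneg_left (Lam_double S (2 ^ k * m)).1 hC.le
          have := mul_le_mul_of_nonneg_left (h2.trans this) hc.le
          linarith
        · have e := SI_norm S hf
          rw [← e.2]; exact (hcC f e.1).2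
    obtain ⟨R, hR, h1, -, h3⟩ := ind k
    have h4 := h3 _ (SI_indic _)
    have h5 := (hcC _ (indic_mem S (2 ^ k * m))).1
    have h6 : c * S.Lam (2 ^ k * m) ≤ (2 * q) ^ k * (C * S.Lam m) := (h5.trans h4).trans h1
    have hL := Lam_pos S hm
    rw [mul_pow] at h6
    have h7 := mul_le_mul_of_nonneg_left hk' (show 0 ≤ 2 ^ k * S.Lam m by positivity)
    push_cast
    refine le_of_mul_le_mul_left ?_ hc
    linarith
  · refine ⟨2 ^ k, by positivity, fun m hm => ?_⟩
    have ind : ∀ k : ℕ, ∃ z, SI (2 ^ k * m) z ∧ N (indic m) ≤ q ^ k * N z := by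
      intro k
      induction k with
      | zero => exact ⟨indic m, by simpa using SI_indic m, by simp⟩
      | succ k ih =>
        obtain ⟨x, hx, hle⟩ := ih
        obtain ⟨y, hy, hp, hn⟩ := SI_extend hx
        rw [← hdbl] at hp hn
        have ex := SI_norm S hx
        have ey := SI_norm S hy
        have ep := SI_norm S hp
        have en := SI_norm S hn
        have hL := Lam_pos S (hpos1 (k + 1) m hm)
        have e1 : (x + y) + (x - y) = (2 : ℝ) • x := by ext j; simp; ring
        have e2 : (x + y) - (x - y) = (2 : ℝ) • y := by ext j; simp; ring
        have bp := hcC _ ep.1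
        have bn := hcC _ en.1
        have bY := hcC _ ey.1
        rw [ep.2] at bp
        rw [en.2] at bn
        rw [ey.2] at bY
        have hd := (Lam_double S (2 ^ k * m)).2
        rw [← hdbl] at hd
        have h := huc (x + y) (x - y) (max (N (x + y)) (N (x - y)))
          (lt_of_lt_of_le (lt_of_lt_of_le (by positivity) bp.1) (le_max_left _ _)) ep.1 en.1
          (by rw [e2]; exact S.smul_mem _ ey.1) (by rw [e1]; exact S.smul_mem _ ex.1)
          (le_max_left _ _) (le_max_right _ _) (by
            rw [e2, hs _ _ ey.1, div_mul_eq_mul_div, div_le_iff₀ hC, abs_of_pos (by norm_num)]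
            have h1 : max (N (x + y)) (N (x - y)) ≤ C * (2 * S.Lam (2 ^ k * m)) :=
              (max_le bp.2 bn.2).trans (mul_le_mul_of_nonneg_left hd hC.le)
            have h2 := mul_le_mul_of_nonneg_left h1 hc.le
            have h3 := mul_le_mul_of_nonneg_left bY.1 hC.le
            linarith)
        rw [e1, hs _ _ ex.1, abs_of_pos (by norm_num)] at h
        have h' : N x ≤ q * max (N (x + y)) (N (x - y)) := by linarith
        have h'' := hle.trans (mul_le_mul_of_nonneg_left h' (pow_nonneg hq0.le k))
        rw [← mul_assoc, ← pow_succ] at h''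
        rcases max_choice (N (x + y)) (N (x - y)) with hm' | hm'
        · exact ⟨_, hp, by rwa [hm'] at h''⟩
        · exact ⟨_, hn, by rwa [hm'] at h''⟩
    obtain ⟨z, hz, hle⟩ := ind k
    have ez := SI_norm S hz
    have h1 := (hcC _ ez.1).2
    rw [ez.2] at h1
    have h2 : c * S.Lam m ≤ N (indic m) := (hcC _ (indic_mem S m)).1
    have h3 := mul_le_mul_of_nonneg_left h1 (pow_nonneg hq0.le k)
    have hL := Lam_pos S (hpos1 k m hm)
    have h4 := mul_le_mul_of_nonneg_right hk' hL.le
    refine le_of_mul_le_mul_left ?_ hc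
    linarith

end AGpaper
end
end

section
/- Let 0<p<1. The difference system 𝒟=(d_n)_{n=1}^∞, where d_n = e_n − e_{n−1} (with the convention e_0 = 0), is a semi-normalized monotone Schauder basis of ℓ_p whose partial-sum projections have norm at most 1, such that span(d_n : 1≤n≤N) = span(e_n : 1≤n≤N) for every N, and whose unconditionality parameters satisfy k̃_m[𝒟,ℓ_p] = m^{1/p} for all m∈ℕ. In particular, for every finitely supported scalar sequence (a_n) and every m, (|a_m|^p + Σ_{n=1}^{m−1} |a_n − a_{n+1}|^p)^{1/p} ≤ (Σ_{n=1}^∞ |a_n − a_{n+1}|^p)^{1/p}. -/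
noncomputable section

open Classical
open scoped ENNReal NNReal

namespace AGpaper

/-! ### Biorthogonal systems and Schauder bases -/

variable {X : Type*} [AddCommGroup X] [Module ℝ X]

variable {mem : X → Prop} {nrm : X → ℝ}

/-- The difference system `d_n = e_n - e_{n-1}` (with `e_{-1} = 0`). -/
def dvec : ℕ → (ℕ → ℝ) := fun n => if n = 0 then unitVec 0 else unitVec n - unitVec (n - 1)

/-! ### Auxiliary lemmas -/

/-- The coordinate functionals of the difference system. -/
def dcoord (n : ℕ) (f : ℕ → ℝ) : ℝ := ∑' k, f (k + n)

lemma abs_sum_rpow_le {p : ℝ} (hp0 : 0 < p) (hp1 : p < 1) (f : ℕ → ℝ) (s : Finset ℕ) :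
    |∑ n ∈ s, f n| ^ p ≤ ∑ n ∈ s, |f n| ^ p := by
  induction s using Finset.induction_on with
  | empty => simp [Real.zero_rpow hp0.ne']
  | insert a s ha ih =>
    rw [Finset.sum_insert ha, Finset.sum_insert ha]
    calc |f a + ∑ n ∈ s, f n| ^ p ≤ (|f a| + |∑ n ∈ s, f n|) ^ p :=
          Real.rpow_le_rpow (abs_nonneg _) (abs_add_le _ _) hp0.le
      _ ≤ |f a| ^ p + |∑ n ∈ s, f n| ^ p :=
          Real.rpow_add_le_add_rpow (abs_nonneg _) (abs_nonneg _) hp0.le hp1.le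
      _ ≤ _ := by gcongr

lemma lpMem_summable {p : ℝ} (hp0 : 0 < p) (hp1 : p < 1) {f : ℕ → ℝ} (hf : lpMem p f) :
    Summable f := by
  have h0 := hf.tendsto_atTop_zero
  have h1 : ∀ᶠ n in Filter.atTop, |f n| ^ p < 1 := h0.eventually (gt_mem_nhds one_pos)
  obtain ⟨N, hN⟩ := Filter.eventually_atTop.1 h1
  rw [← summable_nat_add_iff N]
  refine Summable.of_norm_bounded ((summable_nat_add_iff N).2 hf) fun n => ?_
  have h2 := hN (n + N) (by omega)
  have h3 : |f (n + N)| ≤ 1 := by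
    by_contra h
    push Not at h
    exact absurd (Real.one_lt_rpow h hp0) (not_lt.2 h2.le)
  rw [Real.norm_eq_abs]
  simpa using Real.rpow_le_rpow_of_exponent_ge' (abs_nonneg _) h3 hp0.le hp1.le

lemma abs_tsum_rpow_le {p : ℝ} (hp0 : 0 < p) (hp1 : p < 1) {f : ℕ → ℝ} (hf : lpMem p f) :
    |∑' n, f n| ^ p ≤ ∑' n, |f n| ^ p := by
  have h1 := (lpMem_summable hp0 hp1 hf).hasSum.tendsto_sum_nat
  have h2 := (h1.abs).rpow_const (p := p) (Or.inr hp0.le)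
  refine le_of_tendsto h2 (Filter.Eventually.of_forall fun n => ?_)
  refine (abs_sum_rpow_le hp0 hp1 f _).trans ?_
  exact hf.sum_le_tsum _ fun i _ => Real.rpow_nonneg (abs_nonneg _) _

lemma lpMem_shift {p : ℝ} {f : ℕ → ℝ} (hf : lpMem p f) (m : ℕ) :
    lpMem p (fun k => f (k + m)) := (summable_nat_add_iff m).2 hf

lemma abs_dcoord_rpow_le {p : ℝ} (hp0 : 0 < p) (hp1 : p < 1) {f : ℕ → ℝ} (hf : lpMem p f)
    (m : ℕ) : |dcoord m f| ^ p ≤ ∑' k, |f (k + m)| ^ p :=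
  abs_tsum_rpow_le hp0 hp1 (lpMem_shift hf m)

lemma tail_le {p : ℝ} {f : ℕ → ℝ} (hf : lpMem p f) (m : ℕ) :
    ∑' k, |f (k + m)| ^ p ≤ ∑' k, |f k| ^ p := by
  have := hf.sum_add_tsum_nat_add m
  have h2 : 0 ≤ ∑ i ∈ Finset.range m, |f i| ^ p :=
    Finset.sum_nonneg fun i _ => Real.rpow_nonneg (abs_nonneg _) _
  linarith

lemma dcoord_succ {p : ℝ} (hp0 : 0 < p) (hp1 : p < 1) {f : ℕ → ℝ} (hf : lpMem p f)
    (m : ℕ) : dcoord m f = f m + dcoord (m + 1) f := by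
  have h := (lpMem_summable hp0 hp1 (lpMem_shift hf m)).tsum_eq_zero_add
  simp only [dcoord]
  rw [h, zero_add]
  have h2 : ∀ k, k + 1 + m = k + (m + 1) := fun k => by omega
  simp only [h2]

lemma dvec_apply (n j : ℕ) : dvec n j = unitVec n j - unitVec n (j + 1) := by
  rcases n with _ | n
  · simp [dvec, unitVec]
  · simp [dvec, unitVec]

lemma sum_dvec_apply (A : Finset ℕ) (a : ℕ → ℝ) (j : ℕ) :
    (∑ n ∈ A, a n • dvec n) j =
      (if j ∈ A then a j else 0) - (if j + 1 ∈ A then a (j + 1) else 0) := by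
  simp [Finset.sum_apply, dvec_apply, mul_sub, Finset.sum_sub_distrib, unitVec]

lemma dcoord_diff (f a : ℕ → ℝ) (N : ℕ) (hN : ∀ j, N ≤ j → a j = 0)
    (hf : ∀ j, f j = a j - a (j + 1)) (m : ℕ) : dcoord m f = a m := by
  unfold dcoord
  rw [tsum_eq_sum (s := Finset.range N)]
  · have h : ∀ k, f (k + m) = a (k + m) - a (k + 1 + m) := fun k => by
      rw [hf]; congr 2; omega
    simp only [h]
    rw [Finset.sum_range_sub' (fun k => a (k + m))]
    simp [hN (N + m) (by omega)]
  · intro k hk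
    simp only [Finset.mem_range, not_lt] at hk
    rw [hf, hN _ (by omega), hN _ (by omega), sub_zero]

lemma finset_bound (A : Finset ℕ) : ∃ N, ∀ j, N ≤ j → j ∉ A := by
  refine ⟨A.sup id + 1, fun j hj hA => ?_⟩
  have : id j ≤ A.sup id := Finset.le_sup hA
  simp only [id] at this
  omega

lemma dcoord_sum (A : Finset ℕ) (a : ℕ → ℝ) (m : ℕ) :
    dcoord m (∑ n ∈ A, a n • dvec n) = if m ∈ A then a m else 0 := by
  obtain ⟨N, hN⟩ := finset_bound A
  exact dcoord_diff _ (fun j => if j ∈ A then a j else 0) N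
    (fun j hj => by simp [hN j hj]) (fun j => sum_dvec_apply A a j) m

lemma lpMem_of_finite {p : ℝ} (hp0 : 0 < p) (f : ℕ → ℝ) (N : ℕ) (hN : ∀ j, N ≤ j → f j = 0) :
    lpMem p f := by
  refine summable_of_ne_finset_zero (s := Finset.range N) fun j hj => ?_
  simp only [Finset.mem_range, not_lt] at hj
  rw [hN j hj, abs_zero, Real.zero_rpow hp0.ne']

lemma lpT_of_finite {p : ℝ} (hp0 : 0 < p) (f : ℕ → ℝ) (N : ℕ) (hN : ∀ j, N ≤ j → f j = 0) :
    ∑' j, |f j| ^ p = ∑ j ∈ Finset.range N, |f j| ^ p := by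
  refine tsum_eq_sum (s := Finset.range N) fun j hj => ?_
  simp only [Finset.mem_range, not_lt] at hj
  rw [hN j hj, abs_zero, Real.zero_rpow hp0.ne']

lemma lpT_nonneg (p : ℝ) (f : ℕ → ℝ) : 0 ≤ ∑' j, |f j| ^ p :=
  tsum_nonneg fun _ => Real.rpow_nonneg (abs_nonneg _) _

lemma dvec_zero (n j : ℕ) (h : n + 1 ≤ j) : dvec n j = 0 := by
  rw [dvec_apply]
  simp [unitVec, show j ≠ n by omega, show j + 1 ≠ n by omega]

lemma lpMem_dvec {p : ℝ} (hp0 : 0 < p) (n : ℕ) : lpMem p (dvec n) :=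
  lpMem_of_finite hp0 _ (n + 1) (dvec_zero n)

lemma lpMem_sum_dvec {p : ℝ} (hp0 : 0 < p) (A : Finset ℕ) (a : ℕ → ℝ) :
    lpMem p (∑ n ∈ A, a n • dvec n) := by
  obtain ⟨N, hN⟩ := finset_bound A
  refine lpMem_of_finite hp0 _ N fun j hj => ?_
  rw [sum_dvec_apply, if_neg (hN _ hj), if_neg (hN _ (by omega)), sub_zero]

lemma abs_le_lpNrm {p : ℝ} (hp0 : 0 < p) (x : ℝ) (f : ℕ → ℝ)
    (h : |x| ^ p ≤ ∑' j, |f j| ^ p) : |x| ≤ lpNrm p f := by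
  have := Real.rpow_le_rpow (Real.rpow_nonneg (abs_nonneg _) _) h (one_div_pos.2 hp0).le
  rwa [one_div, Real.rpow_rpow_inv (abs_nonneg _) hp0.ne', ← one_div] at this

lemma partialSum_T_le {p : ℝ} (hp0 : 0 < p) (hp1 : p < 1) {f : ℕ → ℝ} (hf : lpMem p f)
    (m : ℕ) :
    ∑' j, |(∑ n ∈ Finset.range m, dcoord n f • dvec n) j| ^ p ≤ ∑' j, |f j| ^ p := by
  rw [lpT_of_finite hp0 _ m]
  · rcases m with _ | k
    · simpa using lpT_nonneg p f
    · rw [Finset.sum_range_succ, ← hf.sum_add_tsum_nat_add k]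
      refine add_le_add (le_of_eq ?_) ?_
      · refine Finset.sum_congr rfl fun j hj => ?_
        have hj' := Finset.mem_range.1 hj
        rw [sum_dvec_apply, if_pos (by simp; omega), if_pos (by simp; omega),
          dcoord_succ hp0 hp1 hf j, add_sub_cancel_right]
      · rw [sum_dvec_apply, if_pos (by simp), if_neg (by simp), sub_zero]
        exact abs_dcoord_rpow_le hp0 hp1 hf k
  · intro j hj
    rw [sum_dvec_apply, if_neg (by simp; omega), if_neg (by simp; omega), sub_zero]

lemma error_T_le {p : ℝ} (hp0 : 0 < p) (hp1 : p < 1) {f : ℕ → ℝ} (hf : lpMem p f) (m : ℕ) :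
    ∑' j, |((∑ n ∈ Finset.range m, dcoord n f • dvec n) - f) j| ^ p ≤
      2 * ∑' k, |f (k + m)| ^ p := by
  set u := (∑ n ∈ Finset.range m, dcoord n f • dvec n) - f with hu
  have h1 : ∀ k, |u (k + m)| ^ p = |f (k + m)| ^ p := fun k => by
    rw [hu, Pi.sub_apply, sum_dvec_apply, if_neg (by simp), if_neg (by simp; omega)]
    simp
  have hsum : Summable fun j => |u j| ^ p := by
    rw [← summable_nat_add_iff m]
    simp only [h1]
    exact lpMem_shift hf m
  rw [← hsum.sum_add_tsum_nat_add m]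
  simp only [h1]
  have h2 : ∑ j ∈ Finset.range m, |u j| ^ p ≤ ∑' k, |f (k + m)| ^ p := by
    rcases m with _ | k
    · simpa using lpT_nonneg p f
    · rw [Finset.sum_range_succ, Finset.sum_eq_zero, zero_add]
      · have : u k = dcoord (k + 1) f := by
          rw [hu, Pi.sub_apply, sum_dvec_apply, if_pos (by simp), if_neg (by simp),
            dcoord_succ hp0 hp1 hf k]
          ring
        rw [this]
        exact abs_dcoord_rpow_le hp0 hp1 hf _
      · intro j hj
        have hj' := Finset.mem_range.1 hj
        rw [hu, Pi.sub_apply, sum_dvec_apply, if_pos (by simp; omega), if_pos (by simp; omega),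
          dcoord_succ hp0 hp1 hf j]
        simp [Real.zero_rpow hp0.ne']
  linarith

/-- The difference system as a Schauder basis. -/
def dBasis (p : ℝ) (hp0 : 0 < p) (hp1 : p < 1) : SchauderB (lpMem p) (lpNrm p) where
  vec := dvec
  vec_mem := lpMem_dvec hp0
  coord := dcoord
  coord_add n f g hf hg := by
    exact (lpMem_summable hp0 hp1 (lpMem_shift hf n)).tsum_add
      (lpMem_summable hp0 hp1 (lpMem_shift hg n))
  coord_smul n a f hf := by
    simp only [dcoord, Pi.smul_apply, smul_eq_mul, tsum_mul_left]
  coord_bdd n := ⟨1, fun f hf => by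
    rw [one_mul]
    exact abs_le_lpNrm hp0 _ _ ((abs_dcoord_rpow_le hp0 hp1 hf n).trans (tail_le hf n))⟩
  biorth m n := by
    have := dcoord_sum {n} (fun _ => 1) m
    simpa using this
  expansion f hf ε hε := by
    have ht := tendsto_sum_nat_add (fun j => |f j| ^ p)
    have hev := ht.eventually (gt_mem_nhds (show (0 : ℝ) < ε ^ p / 2 by positivity))
    obtain ⟨N, hN⟩ := Filter.eventually_atTop.1 hev
    refine ⟨N, fun n hn => ?_⟩
    have h1 := error_T_le hp0 hp1 hf n
    have h2 := hN n hn
    have h3 : ∑' j, |((∑ n ∈ Finset.range n, dcoord n f • dvec n) - f) j| ^ p < ε ^ p := by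
      linarith
    have h4 := Real.rpow_lt_rpow (lpT_nonneg _ _) h3 (one_div_pos.2 hp0)
    rw [one_div, Real.rpow_rpow_inv hε.le hp0.ne', ← one_div] at h4
    exact h4

lemma lpNrm_mono {p : ℝ} (hp0 : 0 < p) {f g : ℕ → ℝ}
    (h : ∑' j, |f j| ^ p ≤ ∑' j, |g j| ^ p) : lpNrm p f ≤ lpNrm p g :=
  Real.rpow_le_rpow (lpT_nonneg _ _) h (one_div_pos.2 hp0).le

lemma semiNorm {p : ℝ} (hp0 : 0 < p) (n : ℕ) :
    1 ≤ lpNrm p (dvec n) ∧ lpNrm p (dvec n) ≤ 2 ^ (1 / p) := by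
  constructor
  · have := abs_le_lpNrm hp0 1 (dvec n) ?_
    · simpa using this
    · have h := (lpMem_dvec hp0 n).le_tsum n fun _ _ => Real.rpow_nonneg (abs_nonneg _) _
      have h2 : dvec n n = 1 := by rw [dvec_apply]; simp [unitVec]
      rwa [h2] at h
  · refine Real.rpow_le_rpow (lpT_nonneg _ _) ?_ (one_div_pos.2 hp0).le
    rw [tsum_eq_sum (s := {n, n - 1})]
    · calc ∑ j ∈ {n, n - 1}, |dvec n j| ^ p ≤ ∑ j ∈ ({n, n - 1} : Finset ℕ), (1 : ℝ) := by
            refine Finset.sum_le_sum fun j _ => ?_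
            refine Real.rpow_le_one (abs_nonneg _) ?_ hp0.le
            rw [dvec_apply]
            unfold unitVec
            split_ifs <;> norm_num
        _ ≤ 2 := by
            rw [Finset.sum_const, nsmul_eq_mul, mul_one]
            exact_mod_cast Finset.card_le_two
    · intro j hj
      simp only [Finset.mem_insert, Finset.mem_singleton, not_or] at hj
      rw [dvec_apply]
      simp [unitVec, hj.1, show j + 1 ≠ n by omega, Real.zero_rpow hp0.ne']

lemma span_eq (N : ℕ) : Submodule.span ℝ (dvec '' Set.Iio N) =
    Submodule.span ℝ (unitVec '' Set.Iio N) := by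
  apply le_antisymm
  · rw [Submodule.span_le]
    rintro _ ⟨n, hn, rfl⟩
    simp only [Set.mem_Iio] at hn
    rcases n with _ | n
    · exact Submodule.subset_span ⟨0, hn, by simp [dvec]⟩
    · have : dvec (n + 1) = unitVec (n + 1) - unitVec n := by simp [dvec]
      rw [this]
      exact Submodule.sub_mem _ (Submodule.subset_span ⟨n + 1, hn, rfl⟩)
        (Submodule.subset_span ⟨n, by simp; omega, rfl⟩)
  · rw [Submodule.span_le]
    rintro _ ⟨n, hn, rfl⟩
    simp only [Set.mem_Iio] at hn
    induction n with
    | zero => exact Submodule.subset_span ⟨0, hn, by simp [dvec]⟩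
    | succ n ih =>
      have : unitVec (n + 1) = dvec (n + 1) + unitVec n := by simp [dvec]
      rw [this]
      exact Submodule.add_mem _ (Submodule.subset_span ⟨n + 1, hn, rfl⟩) (ih (by omega))

lemma ktilde_eq (p : ℝ) (hp0 : 0 < p) (hp1 : p < 1) (m : ℕ) (hm : 1 ≤ m) :
    (dBasis p hp0 hp1).toBioSystem.ktilde m = (m : ℝ) ^ (1 / p) := by
  apply IsGreatest.csSup_eq
  constructor
  · refine ⟨(Finset.range m).filter (fun n => n % 2 = (m - 1) % 2), fun _ => 1, ?_, ?_⟩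
    · change (∑' j, |(∑ n ∈ Finset.range m, (1 : ℝ) • dvec n) j| ^ p) ^ (1 / p) ≤ 1
      refine Real.rpow_le_one (lpT_nonneg _ _) ?_ (one_div_pos.2 hp0).le
      rw [tsum_eq_single (m - 1)]
      · rw [sum_dvec_apply _ (fun _ => (1 : ℝ)), if_pos (by simp; omega),
          if_neg (by simp; omega)]
        simp
      · intro j hj
        rw [sum_dvec_apply _ (fun _ => (1 : ℝ))]
        by_cases h : j < m
        · rw [if_pos (by simp; omega), if_pos (by simp; omega)]
          simp [Real.zero_rpow hp0.ne']
        · rw [if_neg (by simp; omega), if_neg (by simp; omega)]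
          simp [Real.zero_rpow hp0.ne']
    · change _ = (∑' j, |(∑ k ∈ (Finset.range m).filter (fun n => n % 2 = (m - 1) % 2),
        dcoord k (∑ n ∈ Finset.range m, (1 : ℝ) • dvec n) • dvec k) j| ^ p) ^ (1 / p)
      congr 1
      simp only [sum_dvec_apply, dcoord_sum _ (fun _ => (1 : ℝ))]
      rw [tsum_eq_sum (s := Finset.range m)]
      · rw [Finset.sum_congr rfl (g := fun _ => (1 : ℝ))]
        · simp
        · intro j hj
          have hj' := Finset.mem_range.1 hj
          simp only [Finset.mem_filter, Finset.mem_range]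
          by_cases h : j % 2 = (m - 1) % 2
          · rw [if_pos ⟨hj', h⟩, if_pos hj', if_neg (by omega)]
            simp
          · rw [if_neg (by omega), if_pos (by omega), if_pos (by omega)]
            simp
      · intro j hj
        simp only [Finset.mem_range] at hj
        simp only [Finset.mem_filter, Finset.mem_range]
        rw [if_neg (by omega), if_neg (by omega)]
        simp [Real.zero_rpow hp0.ne']
  · rintro t ⟨A, a, ha, rfl⟩
    change lpNrm p (∑ n ∈ Finset.range m, a n • dvec n) ≤ 1 at ha
    set f := ∑ n ∈ Finset.range m, a n • dvec n with hf
    have hmem : lpMem p f := lpMem_sum_dvec hp0 _ _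
    have hT : ∑' j, |f j| ^ p ≤ 1 := by
      by_contra h
      push Not at h
      exact absurd (Real.one_lt_rpow h (one_div_pos.2 hp0)) (not_lt.2 ha)
    have hc : ∀ n, |dcoord n f| ^ p ≤ 1 := fun n =>
      ((abs_dcoord_rpow_le hp0 hp1 hmem n).trans (tail_le hmem n)).trans hT
    have hc0 : ∀ n, m ≤ n → dcoord n f = 0 := fun n hn => by
      rw [hf, dcoord_sum, if_neg (by simp; omega)]
    have hfj : ∀ j, |f j| ^ p ≤ 1 := fun j =>
      (hmem.le_tsum j fun _ _ => Real.rpow_nonneg (abs_nonneg _) _).trans hT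
    change (∑' j, |(∑ k ∈ A, dcoord k f • dvec k) j| ^ p) ^ (1 / p) ≤ _
    refine Real.rpow_le_rpow (lpT_nonneg _ _) ?_ (one_div_pos.2 hp0).le
    rw [lpT_of_finite hp0 _ m]
    · calc _ ≤ ∑ j ∈ Finset.range m, (1 : ℝ) := by
            refine Finset.sum_le_sum fun j _ => ?_
            rw [sum_dvec_apply]
            split_ifs
            · rw [dcoord_succ hp0 hp1 hmem j, add_sub_cancel_right]
              exact hfj j
            · simpa using hc j
            · simpa using hc (j + 1)
            · simp [Real.zero_rpow hp0.ne']
        _ = m := by simp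
    · intro j hj
      rw [sum_dvec_apply, hc0 j hj, hc0 (j + 1) (by omega)]
      simp

lemma last_part {p : ℝ} (hp0 : 0 < p) (hp1 : p < 1) (a : ℕ → ℝ) (N : ℕ)
    (hN : ∀ j, N ≤ j → a j = 0) (m : ℕ) :
    (|a m| ^ p + ∑ n ∈ Finset.range m, |a n - a (n + 1)| ^ p) ^ (1 / p) ≤
        (∑' n : ℕ, |a n - a (n + 1)| ^ p) ^ (1 / p) := by
  have hmem : lpMem p (fun n => a n - a (n + 1)) :=
    lpMem_of_finite hp0 _ N fun j hj => by rw [hN j hj, hN _ (by omega), sub_zero]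
  have h1 := abs_dcoord_rpow_le hp0 hp1 hmem m
  rw [dcoord_diff _ a N hN (fun _ => rfl)] at h1
  have h2 := hmem.sum_add_tsum_nat_add m
  refine Real.rpow_le_rpow ?_ ?_ (one_div_pos.2 hp0).le
  · exact add_nonneg (Real.rpow_nonneg (abs_nonneg _) _)
      (Finset.sum_nonneg fun _ _ => Real.rpow_nonneg (abs_nonneg _) _)
  · simp only at h1 h2
    linarith

theorem statement12 (p : ℝ) (hp0 : 0 < p) (hp1 : p < 1) :
    (∃ b : SchauderB (lpMem p) (lpNrm p), b.vec = dvec ∧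
      b.toBioSystem.SemiNormalized ∧
      (∀ f : ℕ → ℝ, lpMem p f → ∀ m : ℕ,
        lpNrm p (∑ n ∈ Finset.range m, b.coord n f • dvec n) ≤ lpNrm p f) ∧
      (∀ N : ℕ, Submodule.span ℝ (dvec '' Set.Iio N) =
        Submodule.span ℝ (unitVec '' Set.Iio N)) ∧
      (∀ m : ℕ, 1 ≤ m → b.toBioSystem.ktilde m = (m : ℝ) ^ (1 / p))) ∧
    (∀ a : ℕ → ℝ, (∃ N : ℕ, ∀ j, N ≤ j → a j = 0) → ∀ m : ℕ,
      (|a m| ^ p + ∑ n ∈ Finset.range m, |a n - a (n + 1)| ^ p) ^ (1 / p) ≤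
        (∑' n : ℕ, |a n - a (n + 1)| ^ p) ^ (1 / p)) := by
  refine ⟨⟨dBasis p hp0 hp1, rfl, ⟨1, 2 ^ (1 / p), one_pos, fun n => semiNorm hp0 n⟩,
    fun f hf m => lpNrm_mono hp0 (partialSum_T_le hp0 hp1 hf m), span_eq,
    fun m hm => ktilde_eq p hp0 hp1 m hm⟩, ?_⟩
  rintro a ⟨N, hN⟩ m
  exact last_part hp0 hp1 a N hN m

end AGpaper
end
end
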